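/- arXiv:2106.07295 — 7 statements merged into one kernel-verified Lean document; each statement's English description precedes it below -/
import Mathlib

section
/- Let D₁ and D₂ be bounded domains in ℂ, let f : D₁ → D₂ be a proper holomorphic map of multiplicity m, and let ν be a weight on D₂. If u is holomorphic on D₂ with ∫_{D₂} |u|² ν dA < ∞, then the function Λ₁u : z ↦ f′(z)·u(f(z)) is holomorphic on D₁ and ∫_{D₁} |f′(z)·u(f(z))|² ν(f(z)) dA(z) = m·∫_{D₂} |u|² ν dA; in particular Λ₁ maps the weighted Bergman space A^{2,ν}(D₂) into the weighted Bergman space A^{2,ν∘f}(D₁) boundedly. -/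
/-!
A holomorphic `f` is a smooth map of the plane with real Jacobian `|f'|²`. Away from the critical
set `C = {f' = 0}` it is locally injective, so `D₁ \ C` splits into countably many measurable pieces
on each of which the classical change of variables applies. Summing over the pieces
(`lintegral_norm_deriv_sq_mul_comp`) gives, for measurable `g ≥ 0`,
`∫_{D₁ \ C} |f'|² g(f) dA = ∫_{D₂} #(f⁻¹(w) \ C) g(w) dA(w)`.

Properness forces `f` to be nonconstant, so `C` and `f(C)` are countable, hence null
(`countable_criticalPoints`). Off `f(C)` the fiber avoids `C` and is finite (`finite_fiber`), so it
has `m` points; the right-hand side is therefore `m ∫_{D₂} g dA` (`lintegral_proper`). Taking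
`g = |u|² ν` gives the identity.

Since `ν` is only almost everywhere measurable on `D₂`, measurability of `ν ∘ f` requires that `f`
pull null sets back to null sets; this is the same formula applied to indicator functions
(`map_absolutelyContinuous`).
-/

open MeasureTheory Complex Metric

noncomputable section

/-- `ν` is a weight on `D`: measurable on `D`, positive on `D`, with `1/ν` locally
essentially bounded. -/
def IsWeight (D : Set ℂ) (ν : ℂ → ℝ) : Prop :=
  AEMeasurable ν (volume.restrict D) ∧ (∀ z ∈ D, 0 < ν z) ∧
    ∀ K : Set ℂ, K ⊆ D → IsCompact K → ∃ c > 0, ∀ᵐ z ∂(volume.restrict K), c ≤ ν z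

/-- A proper holomorphic map `f : D₁ → D₂` has multiplicity `m` if every non-critical
value `w ∈ D₂` has exactly `m` preimages in `D₁`. -/
def HasMultiplicity (D₁ D₂ : Set ℂ) (f : ℂ → ℂ) (m : ℕ) : Prop :=
  ∀ w ∈ D₂, (∀ z ∈ D₁, f z = w → deriv f z ≠ 0) → (D₁ ∩ f ⁻¹' {w}).ncard = m

section

open Set Filter Topology

/-- Multiplication by `c`, as a real-linear map of the plane, scales area by `|c|²`. -/
lemma abs_det_mulDeriv (c : ℂ) :
    |((ContinuousLinearMap.toSpanSingleton ℂ c).restrictScalars ℝ : ℂ →L[ℝ] ℂ).det| = ‖c‖ ^ 2 := by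
  simp [ContinuousLinearMap.det, LinearMap.det_restrictScalars,
      Algebra.norm_complex_eq, Complex.normSq_eq_norm_sq]

/-- A holomorphic map without critical points is injective on each piece of a countable
measurable partition. -/
lemma exists_injOn_partition {E : Set ℂ} (hE : IsOpen E) {f : ℂ → ℂ}
    (hf : DifferentiableOn ℂ f E) (hf' : ∀ z ∈ E, deriv f z ≠ 0) :
    ∃ A : ℕ → Set ℂ, (∀ n, MeasurableSet (A n)) ∧ Pairwise (Function.onFun Disjoint A) ∧
      (⋃ n, A n) = E ∧ ∀ n, InjOn f (A n) := by
  rcases E.eq_empty_or_nonempty with rfl | hne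
  · exact ⟨fun _ => ∅, by simp, by intro i j _; simp [Function.onFun], by simp, by simp⟩
  have hloc : ∀ z ∈ E, ∃ U ∈ 𝓝[E] z, InjOn f U := by
    intro z hz
    have hs : HasStrictDerivAt f (deriv f z) z :=
      ((hf.analyticOnNhd hE) z hz).hasStrictDerivAt
    have hL := hs.eventually_left_inverse (hf' z hz)
    exact ⟨_, nhdsWithin_le_nhds hL, LeftInvOn.injOn fun x hx => hx⟩
  choose! U hU hinj using hloc
  obtain ⟨t, htE, htc, hcov⟩ := TopologicalSpace.countable_cover_nhdsWithin
    (f := fun z => interior (U z)) (s := E) (fun z hz => by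
      have := hU z hz
      rw [hE.nhdsWithin_eq hz] at this ⊢
      exact interior_mem_nhds.2 this)
  have htne : t.Nonempty := by
    obtain ⟨z, hz⟩ := hne
    obtain ⟨i, hi, _⟩ := mem_iUnion₂.1 (hcov hz)
    exact ⟨i, hi⟩
  obtain ⟨p, rfl⟩ := htc.exists_eq_range htne
  refine ⟨disjointed fun n => E ∩ interior (U (p n)), fun n => MeasurableSet.disjointed
      (fun n => (hE.inter isOpen_interior).measurableSet) n,
    disjoint_disjointed _, ?_, fun n => ?_⟩
  · rw [iUnion_disjointed, ← inter_iUnion]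
    exact inter_eq_left.2 (by simpa using hcov)
  · exact (hinj _ (htE (mem_range_self n))).mono
      ((disjointed_subset _ n).trans (inter_subset_right.trans interior_subset))

/-- The area formula for a holomorphic map without critical points: pulling back by `f` weights
each point `w` by the cardinality of its fiber. -/
lemma lintegral_norm_deriv_sq_mul_comp {E D : Set ℂ} (hE : IsOpen E)
    {f : ℂ → ℂ} (hf : DifferentiableOn ℂ f E) (hf' : ∀ z ∈ E, deriv f z ≠ 0)
    (hmaps : MapsTo f E D) {g : ℂ → ENNReal} (hg : AEMeasurable g (volume.restrict D)) :
    ∫⁻ z in E, ENNReal.ofReal (‖deriv f z‖ ^ 2) * g (f z) =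
      ∫⁻ w in D, ((E ∩ f ⁻¹' {w}).encard : ENNReal) * g w := by
  obtain ⟨A, hAm, hAd, hAE, hinj⟩ := exists_injOn_partition hE hf hf'
  have hAsub : ∀ n, A n ⊆ E := fun n => hAE ▸ subset_iUnion A n
  have himm : ∀ n, MeasurableSet (f '' A n) := fun n =>
    (hAm n).image_of_continuousOn_injOn (hf.continuousOn.mono (hAsub n)) (hinj n)
  have hpiece : ∀ n, ∫⁻ z in A n, ENNReal.ofReal (‖deriv f z‖ ^ 2) * g (f z) =
      ∫⁻ w in D, (f '' A n).indicator g w := by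
    intro n
    have hd : ∀ z ∈ A n, HasFDerivWithinAt f
        ((ContinuousLinearMap.toSpanSingleton ℂ (deriv f z)).restrictScalars ℝ : ℂ →L[ℝ] ℂ)
        (A n) z := fun z hz =>
      ((hf.differentiableAt (hE.mem_nhds (hAsub n hz))).hasDerivAt.hasFDerivAt.restrictScalars
        ℝ).hasFDerivWithinAt
    have h := lintegral_image_eq_lintegral_abs_det_fderiv_mul volume (hAm n) hd (hinj n) g
    simp only [abs_det_mulDeriv] at h
    rw [← h, lintegral_indicator (himm n), Measure.restrict_restrict (himm n),
      inter_eq_left.2 ((hmaps.mono_left (hAsub n)).image_subset)]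
  have hcount : ∀ w, ((E ∩ f ⁻¹' {w}).encard : ENNReal) * g w =
      ∑' n, (f '' A n).indicator g w := by
    intro w
    -- Each piece meets the fiber in at most one point, so it contributes `0` or `1`.
    have hone : ∀ n, (f '' A n).indicator g w = Measure.count (A n ∩ f ⁻¹' {w}) * g w := by
      intro n
      by_cases hw : w ∈ f '' A n
      · obtain ⟨z, hz, rfl⟩ := hw
        have : A n ∩ f ⁻¹' {f z} = {z} := by
          ext y
          constructor
          · rintro ⟨hy, hyz⟩
            exact hinj n hy hz hyz
          · rintro rfl
            exact ⟨hz, rfl⟩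
        rw [this, Measure.count_singleton, one_mul, indicator_of_mem (mem_image_of_mem f hz)]
      · have : A n ∩ f ⁻¹' {w} = ∅ := by
          ext y
          simp only [mem_inter_iff, mem_preimage, mem_singleton_iff, mem_empty_iff_false, iff_false]
          rintro ⟨hy, rfl⟩
          exact hw (mem_image_of_mem f hy)
        rw [this, measure_empty, zero_mul, indicator_of_notMem hw]
    have hmeas : ∀ n, MeasurableSet (A n ∩ f ⁻¹' {w}) := fun n => by
      apply Set.Subsingleton.measurableSet
      rintro x ⟨hx, hxw⟩ y ⟨hy, hyw⟩
      exact hinj n hx hy (hxw.trans hyw.symm)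
    simp_rw [hone]
    rw [ENNReal.tsum_mul_right, ← measure_iUnion _ hmeas, ← iUnion_inter, hAE,
      Measure.count_apply]
    · rw [← hAE, iUnion_inter]
      exact MeasurableSet.iUnion hmeas
    · exact fun i j hij => (hAd hij).mono inter_subset_left inter_subset_left
  calc ∫⁻ z in E, ENNReal.ofReal (‖deriv f z‖ ^ 2) * g (f z)
      = ∑' n, ∫⁻ z in A n, ENNReal.ofReal (‖deriv f z‖ ^ 2) * g (f z) := by
        rw [← lintegral_iUnion hAm hAd, hAE]
    _ = ∑' n, ∫⁻ w in D, (f '' A n).indicator g w := by simp_rw [hpiece]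
    _ = ∫⁻ w in D, ∑' n, (f '' A n).indicator g w :=
        (lintegral_tsum fun n => hg.indicator (himm n)).symm
    _ = _ := by simp_rw [hcount]

/-- The zeros of the derivative of a proper map are countable: properness rules out
that `f` is constant, since then `D₁` would be both compact and open. -/
lemma countable_criticalPoints {D₁ D₂ : Set ℂ} (hD₁o : IsOpen D₁) (hD₁c : IsConnected D₁)
    {f : ℂ → ℂ} (hf : DifferentiableOn ℂ f D₁) (hmaps : MapsTo f D₁ D₂)
    (hproper : ∀ K : Set ℂ, K ⊆ D₂ → IsCompact K → IsCompact (D₁ ∩ f ⁻¹' K)) :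
    {z ∈ D₁ | deriv f z = 0}.Countable := by
  have hne : ∃ x ∈ D₁, deriv f x ≠ 0 := by
    by_contra! h
    obtain ⟨z, hz⟩ := hD₁c.nonempty
    have hcpt : IsCompact D₁ := by
      have := hproper {f z} (singleton_subset_iff.2 (hmaps hz)) isCompact_singleton
      rwa [inter_eq_left.2] at this
      exact fun y hy => hD₁o.is_const_of_deriv_eq_zero hD₁c.isPreconnected hf h hy hz
    rcases isClopen_iff.1 ⟨hcpt.isClosed, hD₁o⟩ with h0 | h1
    · exact hD₁c.nonempty.ne_empty h0
    · exact noncompact_univ ℂ (h1 ▸ hcpt)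
  obtain ⟨x, hx, hx0⟩ := hne
  have hcod := (hf.analyticOnNhd hD₁o).deriv.preimage_zero_mem_codiscreteWithin hx0 hx hD₁c
  have hdisc : IsDiscrete (deriv f ⁻¹' {0} ∩ D₁) := isDiscrete_of_codiscreteWithin hcod
  have : {z ∈ D₁ | deriv f z = 0} = deriv f ⁻¹' {0} ∩ D₁ := by
    ext z; simp [and_comm]
  rw [this]
  exact (HereditarilyLindelofSpace.isLindelof _).countable_of_isDiscrete hdisc

/-- A compact fiber without critical points is discrete, hence finite. -/
lemma finite_fiber {D₁ : Set ℂ} (hD₁o : IsOpen D₁) {f : ℂ → ℂ} (hf : DifferentiableOn ℂ f D₁)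
    {w : ℂ} (hK : IsCompact (D₁ ∩ f ⁻¹' {w}))
    (hw : ∀ z ∈ D₁, f z = w → deriv f z ≠ 0) : (D₁ ∩ f ⁻¹' {w}).Finite := by
  by_contra hinf
  obtain ⟨x, hx, hacc⟩ := Set.Infinite.exists_accPt_of_subset_isCompact hinf hK subset_rfl
  have hd := (hf.differentiableAt (hD₁o.mem_nhds hx.1)).hasDerivAt
  have hev : ∀ᶠ z in 𝓝[≠] x, f z ≠ w := hd.eventually_ne (hw x hx.1 hx.2)
  rw [accPt_iff_frequently_nhdsNE] at hacc
  obtain ⟨y, hy, hyw⟩ := (hacc.and_eventually hev).exists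
  exact hyw hy.2

/-- Change of variables for a proper holomorphic map of multiplicity `m`. -/
lemma lintegral_proper {D₁ D₂ : Set ℂ} (hD₁o : IsOpen D₁) (hD₁c : IsConnected D₁)
    (hD₂o : IsOpen D₂) {f : ℂ → ℂ} (hf : DifferentiableOn ℂ f D₁) (hmaps : MapsTo f D₁ D₂)
    (hproper : ∀ K : Set ℂ, K ⊆ D₂ → IsCompact K → IsCompact (D₁ ∩ f ⁻¹' K))
    {m : ℕ} (hm : HasMultiplicity D₁ D₂ f m)
    {g : ℂ → ENNReal} (hg : AEMeasurable g (volume.restrict D₂)) :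
    ∫⁻ z in D₁, ENNReal.ofReal (‖deriv f z‖ ^ 2) * g (f z) = m * ∫⁻ w in D₂, g w := by
  have hC := countable_criticalPoints hD₁o hD₁c hf hmaps hproper
  set C := {z ∈ D₁ | deriv f z = 0} with hCdef
  have hEeq : D₁ \ C = D₁ ∩ {z | deriv f z ≠ 0} := by
    ext z; simp only [hCdef, Set.mem_sdiff, mem_ofPred_eq, mem_inter_iff]; tauto
  have hEo : IsOpen (D₁ \ C) := by
    rw [hEeq]
    exact (hf.deriv hD₁o).continuousOn.isOpen_inter_preimage hD₁o isOpen_compl_singleton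
  have hEae : (D₁ \ C : Set ℂ) =ᵐ[volume] D₁ := sdiff_null_ae_eq_self (hC.measure_zero _)
  rw [← setLIntegral_congr hEae, lintegral_norm_deriv_sq_mul_comp hEo
    (hf.mono sdiff_subset) (fun z hz h0 => hz.2 ⟨hz.1, h0⟩) (hmaps.mono_left sdiff_subset) hg,
    ← lintegral_const_mul'' _ hg]
  apply lintegral_congr_ae
  -- The critical values form a countable, hence null, set.
  have hcrit : ∀ᵐ w ∂(volume.restrict D₂), w ∉ f '' C :=
    ae_restrict_of_ae ((hC.image f).ae_notMem _)
  filter_upwards [hcrit, ae_restrict_mem hD₂o.measurableSet] with w hw hwD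
  have hreg : ∀ z ∈ D₁, f z = w → deriv f z ≠ 0 := fun z hz hzw h0 => hw ⟨z, ⟨hz, h0⟩, hzw⟩
  have hfin := finite_fiber hD₁o hf
    (hproper {w} (singleton_subset_iff.2 hwD) isCompact_singleton) hreg
  have hfib : (D₁ \ C) ∩ f ⁻¹' {w} = D₁ ∩ f ⁻¹' {w} := by
    ext z
    constructor
    · rintro ⟨hz, hzw⟩; exact ⟨hz.1, hzw⟩
    · rintro ⟨hz, hzw⟩; exact ⟨⟨hz, fun h => hreg z hz hzw h.2⟩, hzw⟩
  rw [hfib, ← hfin.cast_ncard_eq, hm w hwD hreg]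
  simp

/-- `f` pulls null sets of `D₂` back to null sets of `D₁`, because `|f'|²` is almost everywhere
positive and integrates to `0` over such a preimage. -/
lemma map_absolutelyContinuous {D₁ D₂ : Set ℂ} (hD₁o : IsOpen D₁) (hD₁c : IsConnected D₁)
    (hD₂o : IsOpen D₂) {f : ℂ → ℂ} (hf : DifferentiableOn ℂ f D₁) (hmaps : MapsTo f D₁ D₂)
    (hproper : ∀ K : Set ℂ, K ⊆ D₂ → IsCompact K → IsCompact (D₁ ∩ f ⁻¹' K))
    {m : ℕ} (hm : HasMultiplicity D₁ D₂ f m) :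
    (volume.restrict D₁).map f ≪ volume.restrict D₂ := by
  have hfm : AEMeasurable f (volume.restrict D₁) :=
    hf.continuousOn.aemeasurable hD₁o.measurableSet
  have hdm : AEMeasurable (deriv f) (volume.restrict D₁) :=
    (hf.deriv hD₁o).continuousOn.aemeasurable hD₁o.measurableSet
  refine Measure.AbsolutelyContinuous.mk fun s hs h0 => ?_
  rw [Measure.map_apply_of_aemeasurable hfm hs]
  have hg : Measurable (s.indicator (1 : ℂ → ENNReal)) := measurable_one.indicator hs
  have h := lintegral_proper hD₁o hD₁c hD₂o hf hmaps hproper hm hg.aemeasurable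
  rw [lintegral_indicator_one hs, h0, mul_zero] at h
  replace h := (lintegral_eq_zero_iff'
    ((hdm.norm.pow_const 2).ennreal_ofReal.mul (hg.comp_aemeasurable hfm))).1 h
  have hC : ∀ᵐ z ∂(volume.restrict D₁), z ∉ {z ∈ D₁ | deriv f z = 0} :=
    ae_restrict_of_ae
      ((countable_criticalPoints hD₁o hD₁c hf hmaps hproper).ae_notMem _)
  rw [measure_eq_zero_iff_ae_notMem]
  filter_upwards [h, hC, ae_restrict_mem hD₁o.measurableSet] with z hz hzC hzD hzs
  have hd : deriv f z ≠ 0 := fun h0 => hzC ⟨hzD, h0⟩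
  have hpos : 0 < ‖deriv f z‖ ^ 2 := by positivity
  have : s.indicator (1 : ℂ → ENNReal) (f z) = 1 := by
    rw [indicator_of_mem (show f z ∈ s from hzs)]; rfl
  simp only [Pi.mul_apply, Function.comp_apply, this, mul_one, Pi.zero_apply, ENNReal.ofReal_eq_zero] at hz
  exact absurd hz (not_le.2 hpos)

end

/-- The pullback operator `Λ₁ u = f' · (u ∘ f)` maps the weighted Bergman space
`A^{2,ν}(D₂)` into `A^{2,ν∘f}(D₁)`, multiplying the square-integral by the
multiplicity `m`. -/
theorem pullback_weighted_bergman (D₁ D₂ : Set ℂ)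
    (hD₁o : IsOpen D₁) (hD₁c : IsConnected D₁) (hD₁b : Bornology.IsBounded D₁)
    (hD₂o : IsOpen D₂) (hD₂c : IsConnected D₂) (hD₂b : Bornology.IsBounded D₂)
    (f : ℂ → ℂ) (hf : DifferentiableOn ℂ f D₁) (hmaps : Set.MapsTo f D₁ D₂)
    (hproper : ∀ K : Set ℂ, K ⊆ D₂ → IsCompact K → IsCompact (D₁ ∩ f ⁻¹' K))
    (m : ℕ) (hm : HasMultiplicity D₁ D₂ f m)
    (ν : ℂ → ℝ) (hν : IsWeight D₂ ν)
    (u : ℂ → ℂ) (hu : DifferentiableOn ℂ u D₂)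
    (huint : IntegrableOn (fun w => ‖u w‖ ^ 2 * ν w) D₂ volume) :
    DifferentiableOn ℂ (fun z => deriv f z * u (f z)) D₁ ∧
      IntegrableOn (fun z => ‖deriv f z * u (f z)‖ ^ 2 * ν (f z)) D₁ volume ∧
      ∫ z in D₁, ‖deriv f z * u (f z)‖ ^ 2 * ν (f z) =
        (m : ℝ) * ∫ w in D₂, ‖u w‖ ^ 2 * ν w := by
  have hf'd : DifferentiableOn ℂ (deriv f) D₁ := hf.deriv hD₁o
  have hdiff : DifferentiableOn ℂ (fun z => deriv f z * u (f z)) D₁ :=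
    hf'd.mul (hu.comp hf hmaps)
  have hfm : AEMeasurable f (volume.restrict D₁) :=
    hf.continuousOn.aemeasurable hD₁o.measurableSet
  have hνf : AEMeasurable (fun z => ν (f z)) (volume.restrict D₁) :=
    (hν.1.mono_ac (map_absolutelyContinuous hD₁o hD₁c hD₂o hf hmaps hproper hm)).comp_aemeasurable
      hfm
  have hmeas : AEMeasurable (fun z => ‖deriv f z * u (f z)‖ ^ 2 * ν (f z))
      (volume.restrict D₁) :=
    ((hdiff.continuousOn.aemeasurable hD₁o.measurableSet).norm.pow_const 2).mul hνf
  have hpos₁ : 0 ≤ᵐ[volume.restrict D₁] fun z => ‖deriv f z * u (f z)‖ ^ 2 * ν (f z) := by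
    filter_upwards [ae_restrict_mem hD₁o.measurableSet] with z hz
    exact mul_nonneg (sq_nonneg _) (hν.2.1 _ (hmaps hz)).le
  have hpos₂ : 0 ≤ᵐ[volume.restrict D₂] fun w => ‖u w‖ ^ 2 * ν w := by
    filter_upwards [ae_restrict_mem hD₂o.measurableSet] with w hw
    exact mul_nonneg (sq_nonneg _) (hν.2.1 _ hw).le
  have key : ∫⁻ z in D₁, ENNReal.ofReal (‖deriv f z * u (f z)‖ ^ 2 * ν (f z)) =
      m * ∫⁻ w in D₂, ENNReal.ofReal (‖u w‖ ^ 2 * ν w) := by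
    rw [← lintegral_proper hD₁o hD₁c hD₂o hf hmaps hproper hm
      huint.aestronglyMeasurable.aemeasurable.ennreal_ofReal]
    refine lintegral_congr fun z => ?_
    rw [← ENNReal.ofReal_mul (sq_nonneg _), norm_mul, mul_pow, mul_assoc]
  refine ⟨hdiff, ⟨hmeas.aestronglyMeasurable, ?_⟩, ?_⟩
  · rw [hasFiniteIntegral_iff_ofReal hpos₁, key]
    exact ENNReal.mul_lt_top (ENNReal.natCast_lt_top m)
      ((hasFiniteIntegral_iff_ofReal hpos₂).1 huint.2)
  · rw [integral_eq_lintegral_of_nonneg_ae hpos₁ hmeas.aestronglyMeasurable, key,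
      integral_eq_lintegral_of_nonneg_ae hpos₂ huint.aestronglyMeasurable, ENNReal.toReal_mul,
      ENNReal.toReal_natCast]
end
end

section
/- Let D₁ and D₂ be bounded domains in ℂ, let f : D₁ → D₂ be a proper holomorphic map of multiplicity m, and let ν be a weight on D₂. If v is holomorphic on D₁ with ∫_{D₁} |v|² (ν∘f) dA < ∞, then there exists a holomorphic function g on D₂ such that g(w) = ∑_{z ∈ f⁻¹(w)} v(z)/f′(z) for every w ∈ D₂ which is not a critical value of f, and ∫_{D₂} |g|² ν dA ≤ m·∫_{D₁} |v|² (ν∘f) dA. -/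
/-!
The function `g` is the trace of `v / f'` along the fibres of `f`. Over a small disc of regular
values the fibre consists of `m` values `F_k w` of local inverses of `f`
(`ProperCover.exists_branches`), so the trace is holomorphic there, and the trace of any holomorphic
`V` has the trace of `V' / f'` as its derivative (`ProperCover.hasDerivAt_fiberSum`).

The critical values are discrete in `D₂`, since critical points are isolated and `f` is proper.
Near a critical value `e`, choose a bounded primitive `V` of `v` on a neighbourhood of the finite
fibre of `e`; by properness this neighbourhood contains all nearby fibres. The trace of `V` is then
bounded and holomorphic on a punctured disc, hence extends across `e` by Riemann's theorem. Its
derivative is the trace of `v / f'`, which therefore extends as well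
(`ProperCover.exists_local_extension`). This needs no square integrability.

For the norm bound, Cauchy–Schwarz gives `|g|² ≤ m ∑_k |(v / f') ∘ F_k|²`, and
`|F_k'|² = 1 / |f'|²` is the real Jacobian of `F_k`, so that integrating over a measurable set `B` of
regular values on which the branches are defined yields at most `m` times the integral of
`|v|² (ν ∘ f)` over `f⁻¹(B)` (`ProperCover.local_lintegral_le`). The regular values are a countable
disjoint union of such sets, and the critical values form a null set.
-/

open MeasureTheory Complex Metric

noncomputable section

open Set Filter Topology

/-- The standing situation: `f : D₁ → D₂` is a proper holomorphic map of multiplicity `m` from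
a plane domain to an open set. -/
structure ProperCover (D₁ D₂ : Set ℂ) (f : ℂ → ℂ) (m : ℕ) : Prop where
  open₁ : IsOpen D₁
  conn₁ : IsConnected D₁
  open₂ : IsOpen D₂
  diff : DifferentiableOn ℂ f D₁
  maps : MapsTo f D₁ D₂
  proper : ∀ K : Set ℂ, K ⊆ D₂ → IsCompact K → IsCompact (D₁ ∩ f ⁻¹' K)
  mult : HasMultiplicity D₁ D₂ f m

/-- `w` is not a critical value of `f : D₁ → D₂`. Points outside `f '' D₁` are allowed. -/
def IsRegularValue (D₁ : Set ℂ) (f : ℂ → ℂ) (w : ℂ) : Prop :=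
  ∀ z ∈ D₁, f z = w → deriv f z ≠ 0

/-- The trace `w ↦ ∑_{z ∈ f⁻¹(w)} V z` of a function on `D₁`. For proper `f`
all fibres over `D₂` are finite, so that the junk value `0` of an infinite sum is never taken there. -/
def fiberSum (D₁ : Set ℂ) (f V : ℂ → ℂ) (w : ℂ) : ℂ :=
  ∑ᶠ z ∈ D₁ ∩ f ⁻¹' {w}, V z

/-- Zeros of a nonzero holomorphic function do not accumulate in the domain. -/
lemma finite_zeros {D K : Set ℂ} (hD : IsOpen D) (hc : IsConnected D) {h : ℂ → ℂ}
    (hh : DifferentiableOn ℂ h D) (hne : ∃ z ∈ D, h z ≠ 0) (hK : IsCompact K) (hKD : K ⊆ D) :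
    (K ∩ h ⁻¹' {0}).Finite := by
  by_contra hinf
  obtain ⟨x, hxK, hx⟩ := Set.Infinite.exists_accPt_of_subset_isCompact hinf hK inter_subset_left
  rw [accPt_iff_frequently] at hx
  have h1 : ∃ᶠ z in 𝓝[≠] x, h z = 0 := by
    rw [frequently_nhdsWithin_iff]
    exact hx.mono fun y hy => ⟨hy.2.2, hy.1⟩
  obtain ⟨z, hz, hz0⟩ := hne
  exact hz0 ((hh.analyticOnNhd hD).eqOn_zero_of_preconnected_of_frequently_eq_zero
    hc.isPreconnected (hKD hxK) h1 hz)

/-! ### Fibres and critical values -/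

namespace ProperCover

variable {D₁ D₂ : Set ℂ} {f : ℂ → ℂ} {m : ℕ}

/-- If `f` were constant on `D₁`, then `D₁` would be a fibre, hence compact and clopen in `ℂ`. -/
lemma not_const (H : ProperCover D₁ D₂ f m) (c : ℂ) : ∃ z ∈ D₁, f z ≠ c := by
  by_contra! h
  obtain ⟨z, hz⟩ := H.conn₁.nonempty
  have hc : c ∈ D₂ := h z hz ▸ H.maps hz
  have h1 : D₁ ∩ f ⁻¹' {c} = D₁ := inter_eq_left.2 h
  have h2 : IsCompact D₁ := h1 ▸ H.proper {c} (by simpa using hc) isCompact_singleton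
  have h3 : D₁ = univ := IsClopen.eq_univ ⟨h2.isClosed, H.open₁⟩ ⟨z, hz⟩
  exact noncompact_univ ℂ (h3 ▸ h2)

lemma deriv_ne (H : ProperCover D₁ D₂ f m) : ∃ z ∈ D₁, deriv f z ≠ 0 := by
  by_contra! h
  obtain ⟨z, hz⟩ := H.conn₁.nonempty
  obtain ⟨y, hy, hne⟩ := H.not_const (f z)
  exact hne (H.open₁.is_const_of_deriv_eq_zero H.conn₁.isPreconnected H.diff h hy hz)

lemma finite_fiber (H : ProperCover D₁ D₂ f m) {w : ℂ} (hw : w ∈ D₂) :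
    (D₁ ∩ f ⁻¹' {w}).Finite := by
  obtain ⟨y, hy, hne⟩ := H.not_const w
  have := finite_zeros H.open₁ H.conn₁ (h := fun z => f z - w) (H.diff.sub_const w)
    ⟨y, hy, sub_ne_zero.2 hne⟩ (H.proper {w} (by simpa using hw) isCompact_singleton)
    inter_subset_left
  refine this.subset fun z hz => ⟨hz, ?_⟩
  simpa [sub_eq_zero] using hz.2

/-- The critical values are discrete in `D₂`: only finitely many critical points lie over a compact
disc. -/
lemma eventually_regular_punctured (H : ProperCover D₁ D₂ f m) {e : ℂ} (he : e ∈ D₂) :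
    ∀ᶠ w in 𝓝[≠] e, IsRegularValue D₁ f w := by
  obtain ⟨r, hr, hrD⟩ := nhds_basis_closedBall.mem_iff.1 (H.open₂.mem_nhds he)
  have hfin := finite_zeros H.open₁ H.conn₁ (H.diff.deriv H.open₁) H.deriv_ne
    (H.proper _ hrD (isCompact_closedBall e r)) inter_subset_left
  have hfin2 := (hfin.image f).subset (sdiff_subset (t := {e}))
  have h1 : ∀ᶠ w in 𝓝 e, w ∈ closedBall e r := closedBall_mem_nhds e hr
  have h2 : ∀ᶠ w in 𝓝 e, w ∉ f '' (D₁ ∩ f ⁻¹' closedBall e r ∩ deriv f ⁻¹' {0}) \ {e} :=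
    hfin2.isClosed.isOpen_compl.mem_nhds (by simp)
  filter_upwards [nhdsWithin_le_nhds h1, nhdsWithin_le_nhds h2, self_mem_nhdsWithin]
    with w hw1 hw2 hw3 z hz hzw hd
  exact hw2 ⟨⟨z, ⟨⟨hz, by simpa [hzw] using hw1⟩, hd⟩, hzw⟩, hw3⟩

lemma eventually_regular (H : ProperCover D₁ D₂ f m) {e : ℂ} (he : e ∈ D₂)
    (hr : IsRegularValue D₁ f e) : ∀ᶠ w in 𝓝 e, IsRegularValue D₁ f w := by
  have := H.eventually_regular_punctured he
  rw [eventually_nhdsWithin_iff] at this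
  filter_upwards [this] with w hw
  by_cases h : w = e
  · exact h ▸ hr
  · exact hw h

/-- Properness: fibres over points near `e` lie in any given neighbourhood of the fibre of `e`. -/
lemma eventually_fiber_subset (H : ProperCover D₁ D₂ f m) {e : ℂ} (he : e ∈ D₂) {U : Set ℂ}
    (hU : IsOpen U) (hfU : D₁ ∩ f ⁻¹' {e} ⊆ U) :
    ∀ᶠ w in 𝓝 e, D₁ ∩ f ⁻¹' {w} ⊆ U := by
  obtain ⟨r, hr, hrD⟩ := nhds_basis_closedBall.mem_iff.1 (H.open₂.mem_nhds he)
  have hA : IsCompact ((D₁ ∩ f ⁻¹' closedBall e r) \ U) :=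
    (H.proper _ hrD (isCompact_closedBall e r)).diff hU
  have hfA := hA.image_of_continuousOn (H.diff.continuousOn.mono fun z hz => hz.1.1)
  have h1 : ∀ᶠ w in 𝓝 e, w ∈ closedBall e r := closedBall_mem_nhds e hr
  have h2 : ∀ᶠ w in 𝓝 e, w ∉ f '' ((D₁ ∩ f ⁻¹' closedBall e r) \ U) := by
    refine hfA.isClosed.isOpen_compl.mem_nhds ?_
    rintro ⟨z, hz, hze⟩
    exact hz.2 (hfU ⟨hz.1.1, hze⟩)
  filter_upwards [h1, h2] with w hw1 hw2 z hz
  by_contra hzU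
  have hzw : f z = w := hz.2
  exact hw2 ⟨z, ⟨⟨hz.1, by simpa [hzw] using hw1⟩, hzU⟩, hzw⟩

/-! ### Local branches and traces -/

/-- Over a neighbourhood `W` of a regular value, `f` is a trivial covering with holomorphic sheets
`F z`, indexed by the finite fibre `T`. Once the local inverses have disjoint values they exhaust
the fibres, since all regular fibres have `m` points. -/
lemma exists_branches (H : ProperCover D₁ D₂ f m) {e : ℂ} (he : e ∈ D₂)
    (hr : IsRegularValue D₁ f e) :
    ∃ (W : Set ℂ) (T : Finset ℂ) (F : ℂ → ℂ → ℂ), IsOpen W ∧ e ∈ W ∧ W ⊆ D₂ ∧ T.card = m ∧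
      ∀ w ∈ W, IsRegularValue D₁ f w ∧
        (∀ z ∈ T, F z w ∈ D₁ ∧ f (F z w) = w ∧ HasDerivAt (F z) (deriv f (F z w))⁻¹ w) ∧
        InjOn (fun z => F z w) T ∧ D₁ ∩ f ⁻¹' {w} = (fun z => F z w) '' T := by
  classical
  have hfin := H.finite_fiber he
  have hloc : ∀ z ∈ D₁ ∩ f ⁻¹' {e}, ∃ G : ℂ → ℂ, G e = z ∧ ContinuousAt G e ∧
      ∀ᶠ w in 𝓝 e, G w ∈ D₁ ∧ f (G w) = w ∧ HasDerivAt G (deriv f (G w))⁻¹ w := by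
    rintro z ⟨hz, hze⟩
    have hze : f z = e := hze
    have han : AnalyticAt ℂ f z := H.diff.analyticOnNhd H.open₁ z hz
    have hst := han.hasStrictDerivAt.hasStrictFDerivAt_equiv (hr z hz hze)
    set P := hst.toOpenPartialHomeomorph f with hP
    have hcoe : (P : ℂ → ℂ) = f := hst.toOpenPartialHomeomorph_coe
    have hzs : z ∈ P.source := hst.mem_toOpenPartialHomeomorph_source
    have het : e ∈ P.target := by rw [← hze, ← hcoe]; exact P.map_source hzs
    have hPe : P.symm e = z := by rw [← hze, ← hcoe]; exact P.left_inv hzs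
    have hcont : ContinuousAt P.symm e := P.continuousAt_symm het
    refine ⟨P.symm, hPe, hcont, ?_⟩
    have h1 : ∀ᶠ w in 𝓝 e, P.symm w ∈ D₁ :=
      hcont.eventually_mem (by rw [hPe]; exact H.open₁.mem_nhds hz)
    filter_upwards [h1, P.open_target.mem_nhds het, H.eventually_regular he hr] with w hw hwt hwr
    have hfw : f (P.symm w) = w := by rw [← hcoe]; exact P.right_inv hwt
    refine ⟨hw, hfw, P.hasDerivAt_symm hwt (hwr _ hw hfw) ?_⟩
    rw [hcoe]
    exact (H.diff.differentiableAt (H.open₁.mem_nhds hw)).hasDerivAt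
  choose! F hFe hFc hF using hloc
  have hmem : ∀ z, z ∈ hfin.toFinset ↔ z ∈ D₁ ∩ f ⁻¹' {e} := fun z => hfin.mem_toFinset
  have hcard : hfin.toFinset.card = m := by
    rw [← Set.ncard_eq_toFinset_card _ hfin]; exact H.mult e he hr
  have hev1 : ∀ᶠ w in 𝓝 e, ∀ z ∈ hfin.toFinset,
      F z w ∈ D₁ ∧ f (F z w) = w ∧ HasDerivAt (F z) (deriv f (F z w))⁻¹ w := by
    rw [Finset.eventually_all]
    exact fun z hz => hF z ((hmem z).1 hz)
  have hev2 : ∀ᶠ w in 𝓝 e, ∀ z ∈ hfin.toFinset, ∀ z' ∈ hfin.toFinset, z ≠ z' →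
      F z w ≠ F z' w := by
    rw [Finset.eventually_all]
    intro z hz
    rw [Finset.eventually_all]
    intro z' hz'
    by_cases hzz : z = z'
    · simp [hzz]
    · have hz := (hmem z).1 hz
      have hz' := (hmem z').1 hz'
      have hne : F z e - F z' e ≠ 0 := by rwa [hFe z hz, hFe z' hz', sub_ne_zero]
      exact (((hFc z hz).sub (hFc z' hz')).eventually_ne hne).mono fun w hw _ =>
        sub_ne_zero.1 hw
  obtain ⟨W, hW, hWo, heW⟩ := _root_.eventually_nhds_iff.1
    (((hev1.and hev2).and (H.eventually_regular he hr)).and (H.open₂.mem_nhds he))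
  refine ⟨W, hfin.toFinset, F, hWo, heW, fun w hw => (hW w hw).2, hcard, fun w hw => ?_⟩
  obtain ⟨⟨⟨h1, h2⟩, h3⟩, h4⟩ := hW w hw
  have hinj : InjOn (fun z => F z w) hfin.toFinset := fun z hz z' hz' hzz => by
    by_contra hne
    exact h2 z hz z' hz' hne hzz
  refine ⟨h3, h1, hinj, ?_⟩
  symm
  refine Set.eq_of_subset_of_ncard_le ?_ ?_ (H.finite_fiber h4)
  · rintro _ ⟨z, hz, rfl⟩
    exact ⟨(h1 z hz).1, (h1 z hz).2.1⟩
  · rw [H.mult w h4 h3, hinj.ncard_image, Set.ncard_coe_finset, hcard]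

lemma fiberSum_eq {T : Finset ℂ} {F : ℂ → ℂ → ℂ} {w : ℂ} (V : ℂ → ℂ)
    (hinj : InjOn (fun z => F z w) T) (himg : D₁ ∩ f ⁻¹' {w} = (fun z => F z w) '' T) :
    fiberSum D₁ f V w = ∑ z ∈ T, V (F z w) := by
  rw [fiberSum, himg, finsum_mem_image hinj, finsum_mem_coe_finset]

/-- The trace of a holomorphic function is holomorphic at regular values, and differentiating it is
taking the trace of `V' / f'`. -/
lemma hasDerivAt_fiberSum (H : ProperCover D₁ D₂ f m) {e : ℂ} (he : e ∈ D₂)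
    (hr : IsRegularValue D₁ f e) {V V' : ℂ → ℂ}
    (hV : ∀ z ∈ D₁ ∩ f ⁻¹' {e}, HasDerivAt V (V' z) z) :
    HasDerivAt (fiberSum D₁ f V) (fiberSum D₁ f (fun z => V' z / deriv f z) e) e := by
  obtain ⟨W, T, F, hWo, heW, -, -, hW⟩ := H.exists_branches he hr
  obtain ⟨-, hF, hinj, himg⟩ := hW e heW
  rw [fiberSum_eq _ hinj himg]
  have heq : fiberSum D₁ f V =ᶠ[𝓝 e] fun w => ∑ z ∈ T, V (F z w) := by
    filter_upwards [hWo.mem_nhds heW] with w hw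
    exact fiberSum_eq _ (hW w hw).2.2.1 (hW w hw).2.2.2
  refine HasDerivAt.congr_of_eventuallyEq ?_ heq
  refine HasDerivAt.fun_sum fun z hz => ?_
  rw [div_eq_mul_inv]
  exact (hV _ ⟨(hF z hz).1, (hF z hz).2.1⟩).comp e (hF z hz).2.2

lemma norm_fiberSum_le (H : ProperCover D₁ D₂ f m) {w : ℂ} (hw : w ∈ D₂)
    (hr : IsRegularValue D₁ f w) {V : ℂ → ℂ} (hV : ∀ z ∈ D₁ ∩ f ⁻¹' {w}, ‖V z‖ ≤ 1) :
    ‖fiberSum D₁ f V w‖ ≤ m := by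
  have hfin := H.finite_fiber hw
  rw [fiberSum, finsum_mem_eq_finite_toFinset_sum _ hfin]
  refine (norm_sum_le_of_le _ (f := V) fun z hz => hV z (hfin.mem_toFinset.1 hz)).trans ?_
  rw [Finset.sum_const, ← Set.ncard_eq_toFinset_card _ hfin, H.mult w hw hr]
  simp

end ProperCover

/-! ### Extension across the critical values -/

/-- A holomorphic function has a bounded primitive on a neighbourhood of any finite subset of its
domain. -/
lemma exists_local_primitive {D : Set ℂ} (hD : IsOpen D) {v : ℂ → ℂ} (hv : DifferentiableOn ℂ v D)
    {T : Set ℂ} (hT : T.Finite) (hTD : T ⊆ D) :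
    ∃ (U : Set ℂ) (V : ℂ → ℂ), IsOpen U ∧ T ⊆ U ∧ ∀ z ∈ U, HasDerivAt V (v z) z ∧ ‖V z‖ ≤ 1 := by
  classical
  have hloc : ∀ a ∈ T, ∃ (B : Set ℂ) (P : ℂ → ℂ), IsOpen B ∧ a ∈ B ∧
      ∀ z ∈ B, HasDerivAt P (v z) z ∧ ‖P z‖ ≤ 1 := by
    intro a ha
    obtain ⟨r, hr, hrD⟩ := Metric.isOpen_iff.1 hD a (hTD ha)
    obtain ⟨P, hP0, hP⟩ := (hv.mono hrD).isExactOn_ball.with_val_at a 0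
    have hcont : ContinuousAt P a := (hP a (mem_ball_self hr)).continuousAt
    have h1 : ∀ᶠ z in 𝓝 a, ‖P z‖ < 1 :=
      hcont.norm.eventually_lt continuousAt_const (by simp [hP0])
    obtain ⟨B, hB, hBo, haB⟩ :=
      _root_.eventually_nhds_iff.1 (h1.and (ball_mem_nhds a hr))
    exact ⟨B, P, hBo, haB, fun z hz => ⟨hP z (hB z hz).2, (hB z hz).1.le⟩⟩
  choose! B P hBo haB hP using hloc
  obtain ⟨S, hS, hdisj⟩ := hT.t2_separation
  -- glue the primitives along the pairwise disjoint neighbourhoods `S a ∩ B a`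
  let V : ℂ → ℂ := fun z => if h : ∃ a ∈ T, z ∈ S a then P h.choose z else 0
  have hVeq : ∀ a ∈ T, ∀ z ∈ S a, V z = P a z := by
    intro a ha z hz
    have h : ∃ a ∈ T, z ∈ S a := ⟨a, ha, hz⟩
    have hca : h.choose = a := by
      by_contra hne
      exact disjoint_left.1 (hdisj h.choose_spec.1 ha hne) h.choose_spec.2 hz
    simp only [V, dif_pos h, hca]
  refine ⟨⋃ a ∈ T, S a ∩ B a, V, isOpen_biUnion fun a ha => (hS a).2.inter (hBo a ha),
    fun a ha => mem_biUnion ha ⟨(hS a).1, haB a ha⟩, fun z hz => ?_⟩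
  obtain ⟨a, ha, hzS, hzB⟩ := mem_iUnion₂.1 hz
  refine ⟨(hP a ha z hzB).1.congr_of_eventuallyEq ?_, ?_⟩
  · filter_upwards [(hS a).2.mem_nhds hzS] with y hy using hVeq a ha y hy
  · rw [hVeq a ha z hzS]
    exact (hP a ha z hzB).2

namespace ProperCover

variable {D₁ D₂ : Set ℂ} {f : ℂ → ℂ} {m : ℕ}

/-- The trace of `v / f'` has removable singularities at the critical values: near such a point it
is the derivative of the trace of a bounded local primitive of `v`, and that trace extends by
Riemann's theorem. -/
lemma exists_local_extension (H : ProperCover D₁ D₂ f m) {v : ℂ → ℂ}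
    (hv : DifferentiableOn ℂ v D₁) {e : ℂ} (he : e ∈ D₂) :
    ∃ h : ℂ → ℂ, AnalyticAt ℂ h e ∧
      ∀ᶠ w in 𝓝[≠] e, fiberSum D₁ f (fun z => v z / deriv f z) w = h w := by
  obtain ⟨U, V, hUo, hTU, hV⟩ :=
    exists_local_primitive H.open₁ hv (H.finite_fiber he) inter_subset_left
  have hev : ∀ᶠ w in 𝓝 e, (w ≠ e → IsRegularValue D₁ f w) ∧ D₁ ∩ f ⁻¹' {w} ⊆ U ∧ w ∈ D₂ :=
    (eventually_nhdsWithin_iff.1 (H.eventually_regular_punctured he)).and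
      ((H.eventually_fiber_subset he hUo hTU).and (H.open₂.mem_nhds he))
  obtain ⟨N, hN, hNo, heN⟩ := _root_.eventually_nhds_iff.1 hev
  set G := fiberSum D₁ f V
  have hG : ∀ w ∈ N \ {e}, HasDerivAt G (fiberSum D₁ f (fun z => v z / deriv f z) w) w := by
    intro w hw
    obtain ⟨h1, h2, h3⟩ := hN w hw.1
    exact H.hasDerivAt_fiberSum h3 (h1 hw.2) fun z hz => (hV z (h2 hz)).1
  have hbdd : BddAbove (norm ∘ G '' (N \ {e})) := by
    refine ⟨m, ?_⟩
    rintro _ ⟨w, hw, rfl⟩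
    obtain ⟨h1, h2, h3⟩ := hN w hw.1
    exact H.norm_fiberSum_le h3 (h1 hw.2) fun z hz => (hV z (h2 hz)).2
  have hext := Complex.differentiableOn_update_limUnder_of_bddAbove (hNo.mem_nhds heN)
    (fun w hw => (hG w hw).differentiableAt.differentiableWithinAt) hbdd
  refine ⟨_, (hext.analyticOnNhd hNo e heN).deriv, ?_⟩
  filter_upwards [nhdsWithin_le_nhds (hNo.mem_nhds heN), self_mem_nhdsWithin] with w hwN hwe
  have hne : ∀ᶠ x in 𝓝 w, x ≠ e := isOpen_ne.mem_nhds hwe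
  rw [← (hG w ⟨hwN, hwe⟩).deriv]
  refine Filter.EventuallyEq.deriv_eq ?_
  filter_upwards [hne] with x hx
  rw [Function.update_of_ne hx]

/-- The holomorphic extension of the trace of `v / f'` to all of `D₂`. -/
lemma exists_extension (H : ProperCover D₁ D₂ f m) {v : ℂ → ℂ} (hv : DifferentiableOn ℂ v D₁) :
    ∃ g : ℂ → ℂ, DifferentiableOn ℂ g D₂ ∧ ∀ w ∈ D₂, IsRegularValue D₁ f w →
      g w = fiberSum D₁ f (fun z => v z / deriv f z) w := by
  set g₀ := fiberSum D₁ f (fun z => v z / deriv f z)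
  have hlim : ∀ {w : ℂ} {h : ℂ → ℂ}, ContinuousAt h w → (∀ᶠ x in 𝓝[≠] w, g₀ x = h x) →
      limUnder (𝓝[≠] w) g₀ = h w := fun hc he =>
    ((hc.tendsto.mono_left nhdsWithin_le_nhds).congr' (he.mono fun _ hx => hx.symm)).limUnder_eq
  refine ⟨fun w => limUnder (𝓝[≠] w) g₀, fun e he => ?_, fun w hw hr => ?_⟩
  · obtain ⟨h, hh, heq⟩ := H.exists_local_extension hv he
    refine DifferentiableAt.differentiableWithinAt ?_
    refine hh.differentiableAt.congr_of_eventuallyEq ?_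
    have h1 := eventually_nhdsWithin_iff.1 heq
    filter_upwards [h1.eventually_nhds, hh.eventually_continuousAt] with w hw hc
    by_cases hwe : w = e
    · rw [hwe]; exact hlim hh.continuousAt heq
    · refine hlim hc (nhdsWithin_le_nhds ?_)
      have hne : ∀ᶠ x in 𝓝 w, x ≠ e := isOpen_ne.mem_nhds hwe
      filter_upwards [hw, hne] with x hx hxe using hx hxe
  · refine hlim ?_ (Eventually.of_forall fun _ => rfl)
    have hvf : ∀ z ∈ D₁ ∩ f ⁻¹' {w}, HasDerivAt (fun z => v z / deriv f z)
        (deriv (fun z => v z / deriv f z) z) z := fun z hz =>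
      ((hv.differentiableAt (H.open₁.mem_nhds hz.1)).div
        ((H.diff.deriv H.open₁).differentiableAt (H.open₁.mem_nhds hz.1))
        (hr z hz.1 hz.2)).hasDerivAt
    exact (H.hasDerivAt_fiberSum hw hr hvf).continuousAt

end ProperCover

/-! ### The norm inequality -/

/-- Multiplication by `c` scales area by `‖c‖²`. -/
lemma det_mul_real (c : ℂ) :
    ((ContinuousLinearMap.toSpanSingleton ℂ c).restrictScalars ℝ : ℂ →L[ℝ] ℂ).det = ‖c‖ ^ 2 := by
  have h : ((ContinuousLinearMap.toSpanSingleton ℂ c).restrictScalars ℝ : ℂ →L[ℝ] ℂ).det =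
      LinearMap.det (((ContinuousLinearMap.toSpanSingleton ℂ c : ℂ →L[ℂ] ℂ) :
        ℂ →ₗ[ℂ] ℂ).restrictScalars ℝ) := rfl
  rw [h, LinearMap.det_restrictScalars, Algebra.norm_complex_eq]
  have h2 : LinearMap.det ((ContinuousLinearMap.toSpanSingleton ℂ c : ℂ →L[ℂ] ℂ) : ℂ →ₗ[ℂ] ℂ) =
      c := by
    simp
  rw [h2]
  exact Complex.normSq_eq_norm_sq c

namespace ProperCover

variable {D₁ D₂ : Set ℂ} {f : ℂ → ℂ} {m : ℕ}

/-- Every regular value has a neighbourhood over which the norm inequality holds: apply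
Cauchy–Schwarz to the `m` terms of the trace, then change variables on each sheet. -/
lemma local_lintegral_le (H : ProperCover D₁ D₂ f m) {ν : ℂ → ℝ}
    (hν : AEMeasurable ν (volume.restrict D₂)) (hν0 : ∀ w ∈ D₂, 0 < ν w)
    {v : ℂ → ℂ} (hv : DifferentiableOn ℂ v D₁) {e : ℂ} (he : e ∈ D₂)
    (hr : IsRegularValue D₁ f e) :
    ∃ W, IsOpen W ∧ e ∈ W ∧ ∀ B ⊆ W, MeasurableSet B →
      ∫⁻ w in B, ENNReal.ofReal (‖fiberSum D₁ f (fun z => v z / deriv f z) w‖ ^ 2 * ν w) ≤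
        m * ∫⁻ z in D₁ ∩ f ⁻¹' B, ENNReal.ofReal (‖v z‖ ^ 2 * ν (f z)) := by
  obtain ⟨W, T, F, hWo, heW, hWD, hcard, hW⟩ := H.exists_branches he hr
  refine ⟨W, hWo, heW, fun B hBW hB => ?_⟩
  let q : ℂ → ℂ → ℂ := fun z w => v (F z w) / deriv f (F z w)
  have hpt : ∀ w ∈ B, ENNReal.ofReal
      (‖fiberSum D₁ f (fun z => v z / deriv f z) w‖ ^ 2 * ν w) ≤
      m * ∑ z ∈ T, ENNReal.ofReal (‖q z w‖ ^ 2 * ν w) := by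
    intro w hw
    obtain ⟨-, -, hinj, himg⟩ := hW w (hBW hw)
    have hνw := (hν0 w (hWD (hBW hw))).le
    rw [fiberSum_eq _ hinj himg, ← ENNReal.ofReal_sum_of_nonneg fun _ _ => by positivity,
      ← ENNReal.ofReal_natCast, ← ENNReal.ofReal_mul (by positivity)]
    refine ENNReal.ofReal_le_ofReal ?_
    rw [← Finset.sum_mul, ← mul_assoc]
    refine mul_le_mul_of_nonneg_right ?_ hνw
    calc ‖∑ z ∈ T, q z w‖ ^ 2 ≤ (∑ z ∈ T, ‖q z w‖) ^ 2 := by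
          gcongr; exact norm_sum_le _ _
      _ ≤ T.card * ∑ z ∈ T, ‖q z w‖ ^ 2 := sq_sum_le_card_mul_sum_sq
      _ = m * ∑ z ∈ T, ‖q z w‖ ^ 2 := by rw [hcard]
  have hmeas : ∀ z ∈ T, AEMeasurable (fun w => ENNReal.ofReal (‖q z w‖ ^ 2 * ν w))
      (volume.restrict B) := by
    intro z hz
    have hc : ContinuousOn (q z) B := fun w hw => by
      obtain ⟨hreg, hF, -, -⟩ := hW w (hBW hw)
      obtain ⟨h1, h2, h3⟩ := hF z hz
      have hD := H.open₁.mem_nhds h1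
      refine ContinuousAt.continuousWithinAt ?_
      exact (ContinuousAt.comp (f := F z) (hv.differentiableAt hD).continuousAt h3.continuousAt).div
        (ContinuousAt.comp (f := F z) ((H.diff.deriv H.open₁).differentiableAt hD).continuousAt
          h3.continuousAt) (hreg _ h1 h2)
    have hνB : AEMeasurable ν (volume.restrict B) :=
      hν.mono_measure (Measure.restrict_mono (hBW.trans hWD) le_rfl)
    exact (((hc.norm.pow 2).aemeasurable hB).mul hνB).ennreal_ofReal
  have hder : ∀ z ∈ T, ∀ w ∈ B, HasFDerivWithinAt (F z)
      ((ContinuousLinearMap.toSpanSingleton ℂ (deriv f (F z w))⁻¹).restrictScalars ℝ) B w :=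
    fun z hz w hw =>
      (((hW w (hBW hw)).2.1 z hz).2.2.hasFDerivAt.restrictScalars ℝ).hasFDerivWithinAt
  have hinjB : ∀ z ∈ T, InjOn (F z) B := fun z hz w hw w' hw' hww => by
    rw [← ((hW w (hBW hw)).2.1 z hz).2.1, hww, ((hW w' (hBW hw')).2.1 z hz).2.1]
  have hcv : ∀ z ∈ T, ∫⁻ w in B, ENNReal.ofReal (‖q z w‖ ^ 2 * ν w) =
      ∫⁻ x in F z '' B, ENNReal.ofReal (‖v x‖ ^ 2 * ν (f x)) := by
    intro z hz
    rw [lintegral_image_eq_lintegral_abs_det_fderiv_mul volume hB (hder z hz) (hinjB z hz)]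
    refine setLIntegral_congr_fun hB fun w hw => ?_
    rw [det_mul_real, abs_of_nonneg (by positivity), ← ENNReal.ofReal_mul (by positivity),
      ((hW w (hBW hw)).2.1 z hz).2.1]
    simp only [q, norm_div, norm_inv, div_pow, inv_pow]
    congr 1
    ring
  have hdisj : (T : Set ℂ).PairwiseDisjoint fun z => F z '' B := by
    intro z hz z' hz' hne
    refine disjoint_left.2 ?_
    rintro _ ⟨w, hw, rfl⟩ ⟨w', hw', hww⟩
    have : w' = w := by
      rw [← ((hW w (hBW hw)).2.1 z hz).2.1, ← hww, ((hW w' (hBW hw')).2.1 z' hz').2.1]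
    subst this
    exact hne ((hW w' (hBW hw)).2.2.1 hz hz' hww.symm)
  calc ∫⁻ w in B, ENNReal.ofReal (‖fiberSum D₁ f (fun z => v z / deriv f z) w‖ ^ 2 * ν w)
      ≤ ∫⁻ w in B, m * ∑ z ∈ T, ENNReal.ofReal (‖q z w‖ ^ 2 * ν w) := setLIntegral_mono' hB hpt
    _ = m * ∑ z ∈ T, ∫⁻ w in B, ENNReal.ofReal (‖q z w‖ ^ 2 * ν w) := by
        rw [lintegral_const_mul' _ _ (ENNReal.natCast_ne_top m), lintegral_finsetSum' _ hmeas]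
    _ = m * ∫⁻ x in ⋃ z ∈ T, F z '' B, ENNReal.ofReal (‖v x‖ ^ 2 * ν (f x)) := by
        rw [Finset.sum_congr rfl hcv, lintegral_biUnion_finset hdisj fun z hz =>
          measurable_image_of_fderivWithin hB (hder z hz) (hinjB z hz)]
    _ ≤ _ := by
        gcongr
        refine iUnion₂_subset fun z hz => ?_
        rintro _ ⟨w, hw, rfl⟩
        obtain ⟨h1, h2, -⟩ := (hW w (hBW hw)).2.1 z hz
        exact ⟨h1, by rwa [mem_preimage, h2]⟩

lemma isOpen_regular (H : ProperCover D₁ D₂ f m) :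
    IsOpen {w | w ∈ D₂ ∧ IsRegularValue D₁ f w} :=
  isOpen_iff_mem_nhds.2 fun _ hw =>
    Filter.inter_mem (H.open₂.mem_nhds hw.1) (H.eventually_regular hw.1 hw.2)

/-- The critical values form a discrete, hence countable, hence null set. -/
lemma ae_regular (H : ProperCover D₁ D₂ f m) :
    volume (D₂ \ {w | w ∈ D₂ ∧ IsRegularValue D₁ f w}) = 0 := by
  refine measure_null_of_locally_null _ fun e he => ?_
  refine ⟨{e}, ?_, measure_singleton e⟩
  have h := eventually_nhdsWithin_iff.1 (H.eventually_regular_punctured he.1)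
  filter_upwards [nhdsWithin_le_nhds h, self_mem_nhdsWithin] with w hw hw'
  by_contra hne
  exact hw'.2 ⟨hw'.1, hw hne⟩

/-- The global norm inequality, obtained by adding up the local ones over a countable measurable
partition of the set of regular values. -/
lemma lintegral_le (H : ProperCover D₁ D₂ f m) {ν : ℂ → ℝ}
    (hν : AEMeasurable ν (volume.restrict D₂)) (hν0 : ∀ w ∈ D₂, 0 < ν w)
    {v : ℂ → ℂ} (hv : DifferentiableOn ℂ v D₁) :
    ∫⁻ w in {w | w ∈ D₂ ∧ IsRegularValue D₁ f w},
        ENNReal.ofReal (‖fiberSum D₁ f (fun z => v z / deriv f z) w‖ ^ 2 * ν w) ≤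
      m * ∫⁻ z in D₁, ENNReal.ofReal (‖v z‖ ^ 2 * ν (f z)) := by
  set R := {w | w ∈ D₂ ∧ IsRegularValue D₁ f w} with hR
  have hloc := fun e (he : e ∈ R) => H.local_lintegral_le hν hν0 hv he.1 he.2
  choose! W hWo heW hW using hloc
  obtain ⟨t, htR, htc, hcov⟩ := TopologicalSpace.countable_cover_nhdsWithin
    (f := W) (s := R) fun x hx => mem_nhdsWithin_of_mem_nhds ((hWo x hx).mem_nhds (heW x hx))
  rcases t.eq_empty_or_nonempty with rfl | htne
  · have : R = ∅ := subset_empty_iff.1 (by simpa using hcov)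
    simp [this]
  obtain ⟨u, rfl⟩ := htc.exists_eq_range htne
  have huR : ∀ n, u n ∈ R := fun n => htR (mem_range_self n)
  let A : ℕ → Set ℂ := fun n => R ∩ disjointed (fun n => W (u n)) n
  have hAm : ∀ n, MeasurableSet (A n) := fun n =>
    H.isOpen_regular.measurableSet.inter
      (MeasurableSet.disjointed (fun k => (hWo _ (huR k)).measurableSet) n)
  have hAd : Pairwise (Function.onFun Disjoint A) := fun i j hij =>
    (disjoint_disjointed _ hij).mono inter_subset_right inter_subset_right
  have hAU : ⋃ n, A n = R := by
    rw [← inter_iUnion, iUnion_disjointed, inter_eq_left]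
    simpa using hcov
  have hAW : ∀ n, A n ⊆ W (u n) := fun n => inter_subset_right.trans (disjointed_subset _ n)
  have hpre : ∀ n, MeasurableSet (D₁ ∩ f ⁻¹' A n) := fun n => by
    rw [← Subtype.image_preimage_coe]
    refine H.open₁.measurableSet.subtype_image ?_
    exact (continuousOn_iff_continuous_domRestrict.1 H.diff.continuousOn).measurable (hAm n)
  calc _ = ∑' n, ∫⁻ w in A n,
        ENNReal.ofReal (‖fiberSum D₁ f (fun z => v z / deriv f z) w‖ ^ 2 * ν w) := by
        rw [← lintegral_iUnion hAm hAd, hAU]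
    _ ≤ ∑' n, m * ∫⁻ z in D₁ ∩ f ⁻¹' A n, ENNReal.ofReal (‖v z‖ ^ 2 * ν (f z)) :=
        ENNReal.tsum_le_tsum fun n => hW _ (huR n) _ (hAW n) (hAm n)
    _ = m * ∫⁻ z in ⋃ n, D₁ ∩ f ⁻¹' A n, ENNReal.ofReal (‖v z‖ ^ 2 * ν (f z)) := by
        rw [ENNReal.tsum_mul_left, lintegral_iUnion hpre fun i j hij =>
          ((hAd hij).preimage f).mono inter_subset_right inter_subset_right]
    _ ≤ _ := by
        gcongr
        exact iUnion_subset fun n => inter_subset_left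

end ProperCover

/-- The pushforward operator `Λ₂ v (w) = ∑_{z ∈ f⁻¹(w)} v(z)/f'(z)` extends to a
holomorphic function on `D₂` and maps `A^{2,ν∘f}(D₁)` into `A^{2,ν}(D₂)` with norm
bound governed by the multiplicity `m`. -/
theorem pushforward_weighted_bergman (D₁ D₂ : Set ℂ)
    (hD₁o : IsOpen D₁) (hD₁c : IsConnected D₁) (hD₁b : Bornology.IsBounded D₁)
    (hD₂o : IsOpen D₂) (hD₂c : IsConnected D₂) (hD₂b : Bornology.IsBounded D₂)
    (f : ℂ → ℂ) (hf : DifferentiableOn ℂ f D₁) (hmaps : Set.MapsTo f D₁ D₂)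
    (hproper : ∀ K : Set ℂ, K ⊆ D₂ → IsCompact K → IsCompact (D₁ ∩ f ⁻¹' K))
    (m : ℕ) (hm : HasMultiplicity D₁ D₂ f m)
    (ν : ℂ → ℝ) (hν : IsWeight D₂ ν)
    (v : ℂ → ℂ) (hv : DifferentiableOn ℂ v D₁)
    (hvint : IntegrableOn (fun z => ‖v z‖ ^ 2 * ν (f z)) D₁ volume) :
    ∃ g : ℂ → ℂ, DifferentiableOn ℂ g D₂ ∧
      (∀ w ∈ D₂, (∀ z ∈ D₁, f z = w → deriv f z ≠ 0) →
        g w = ∑ᶠ z ∈ D₁ ∩ f ⁻¹' {w}, v z / deriv f z) ∧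
      IntegrableOn (fun w => ‖g w‖ ^ 2 * ν w) D₂ volume ∧
      ∫ w in D₂, ‖g w‖ ^ 2 * ν w ≤ (m : ℝ) * ∫ z in D₁, ‖v z‖ ^ 2 * ν (f z) := by
  have H : ProperCover D₁ D₂ f m := ⟨hD₁o, hD₁c, hD₂o, hf, hmaps, hproper, hm⟩
  obtain ⟨hνm, hν0, -⟩ := hν
  obtain ⟨g, hg, hgeq⟩ := H.exists_extension hv
  set R := {w | w ∈ D₂ ∧ IsRegularValue D₁ f w} with hR
  have hRD : (volume.restrict D₂ : Measure ℂ) = volume.restrict R :=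
    Measure.restrict_congr_set (((show R ≤ D₂ from fun w hw => hw.1).eventuallyLE).antisymm
      (ae_le_set.2 H.ae_regular)).symm
  have hle : ∫⁻ w in D₂, ENNReal.ofReal (‖g w‖ ^ 2 * ν w) ≤
      m * ∫⁻ z in D₁, ENNReal.ofReal (‖v z‖ ^ 2 * ν (f z)) := by
    refine le_trans (le_of_eq ?_) (H.lintegral_le hνm hν0 hv)
    rw [hRD]
    refine setLIntegral_congr_fun H.isOpen_regular.measurableSet fun w hw => ?_
    rw [hgeq w hw.1 hw.2]
  have hnn₁ : 0 ≤ᵐ[volume.restrict D₁] fun z => ‖v z‖ ^ 2 * ν (f z) :=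
    (ae_restrict_iff' hD₁o.measurableSet).2 (ae_of_all _ fun z hz =>
      mul_nonneg (sq_nonneg _) (hν0 _ (hmaps hz)).le)
  have hnn₂ : 0 ≤ᵐ[volume.restrict D₂] fun w => ‖g w‖ ^ 2 * ν w :=
    (ae_restrict_iff' hD₂o.measurableSet).2 (ae_of_all _ fun w hw =>
      mul_nonneg (sq_nonneg _) (hν0 _ hw).le)
  have hmeas : AEStronglyMeasurable (fun w => ‖g w‖ ^ 2 * ν w) (volume.restrict D₂) :=
    (((hg.continuousOn.norm.pow 2).aemeasurable hD₂o.measurableSet).mul hνm).aestronglyMeasurable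
  rw [← ofReal_integral_eq_lintegral_ofReal hvint hnn₁, ← ENNReal.ofReal_natCast,
    ← ENNReal.ofReal_mul (Nat.cast_nonneg m)] at hle
  refine ⟨g, hg, fun w hw hr => hgeq w hw hr, ⟨hmeas, ?_⟩, ?_⟩
  · rw [hasFiniteIntegral_iff_ofReal hnn₂]
    exact hle.trans_lt ENNReal.ofReal_lt_top
  · rw [integral_eq_lintegral_of_nonneg_ae hnn₂ hmeas]
    exact ENNReal.toReal_le_of_le_ofReal
      (mul_nonneg (Nat.cast_nonneg m) (integral_nonneg_of_ae hnn₁)) hle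
end
end

section
/- Let D₁ and D₂ be bounded domains in ℂ, let f : D₁ → D₂ be a proper holomorphic map, and let ν be a weight on D₂. If u belongs to the weighted reduced Bergman space 𝒟^ν(D₂), i.e. u is holomorphic on D₂, u = ũ′ for some holomorphic ũ on D₂, and ∫_{D₂} |u|² ν dA < ∞, then the function z ↦ f′(z)·u(f(z)) belongs to 𝒟^{ν∘f}(D₁): it is holomorphic on D₁, has a primitive on D₁ (namely ũ∘f), and satisfies ∫_{D₁} |f′(z)·u(f(z))|² ν(f(z)) dA(z) < ∞. -/
/-!
The primitive is given by the chain rule, so the content is the integrability. If `f' = 0` on `D₁`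
there is nothing to prove. Otherwise the critical points of `f` in `D₁` are isolated, hence
countable, and so are the critical values. Over a regular value of a proper holomorphic map the
fibre is finite, and its cardinality is locally constant
(`eventually_ncard_fiberOn_eq`). Removing a countable set from the domain `D₂` does not disconnect
it, so this cardinality is a constant `m` off the critical values
(`exists_eq_of_locally_eq_off_countable`). The real Jacobian of `f` is `|f'|²`, so cutting the set
of regular points into countably many measurable pieces on which `f` is injective and applying the
change of variables formula on each gives
`∫_{D₁} |f'|² (|u|² ν) ∘ f ≤ m ∫_{D₂} |u|² ν < ∞` (`integrableOn_pullback_of_ncard_le`).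
-/

open MeasureTheory Complex Metric

noncomputable section

open scoped Topology

/-- The **fibre** over `w` of the restriction of `f` to `D`. -/
def fiberOn (D : Set ℂ) (f : ℂ → ℂ) (w : ℂ) : Set ℂ := D ∩ f ⁻¹' {w}

lemma exists_isOpen_injOn {f : ℂ → ℂ} {z : ℂ} (hf : AnalyticAt ℂ f z) (hz : deriv f z ≠ 0) :
    ∃ V : Set ℂ, IsOpen V ∧ z ∈ V ∧ Set.InjOn f V := by
  have h := hf.hasStrictDerivAt.hasStrictFDerivAt_equiv hz
  exact ⟨(h.toOpenPartialHomeomorph f).source, (h.toOpenPartialHomeomorph f).open_source,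
    h.mem_toOpenPartialHomeomorph_source, (h.toOpenPartialHomeomorph f).injOn⟩

/-- Over a regular value the fibre is compact by properness, and discrete because `f` is injective
near each of its points. -/
lemma finite_fiberOn {D₁ D₂ : Set ℂ} (hD₁o : IsOpen D₁) {f : ℂ → ℂ}
    (hf : DifferentiableOn ℂ f D₁)
    (hproper : ∀ K : Set ℂ, K ⊆ D₂ → IsCompact K → IsCompact (D₁ ∩ f ⁻¹' K))
    {w : ℂ} (hw : w ∈ D₂) (hreg : ∀ z ∈ fiberOn D₁ f w, deriv f z ≠ 0) :
    (fiberOn D₁ f w).Finite := by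
  refine (hproper {w} (by simpa using hw) isCompact_singleton).finite ?_
  rw [isDiscrete_iff_nhdsNE]
  intro z hz
  have hd := (hf.differentiableAt (hD₁o.mem_nhds hz.1)).hasDerivAt
  have h := hd.eventually_ne (c := w) (hreg z hz)
  rw [← disjoint_iff, Filter.disjoint_principal_right]
  filter_upwards [h] with y hy hy'
  exact hy hy'.2

/-- The cardinality of the fibres of a proper holomorphic map is locally constant at a regular
value: the inverse function theorem gives one preimage near each preimage of `w`, and properness
excludes preimages elsewhere. -/
lemma eventually_ncard_fiberOn_eq {D₁ D₂ : Set ℂ} (hD₁o : IsOpen D₁) (hD₂o : IsOpen D₂)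
    {f : ℂ → ℂ} (hf : DifferentiableOn ℂ f D₁)
    (hproper : ∀ K : Set ℂ, K ⊆ D₂ → IsCompact K → IsCompact (D₁ ∩ f ⁻¹' K))
    {w : ℂ} (hw : w ∈ D₂) (hreg : ∀ z ∈ fiberOn D₁ f w, deriv f z ≠ 0) :
    ∀ᶠ w' in 𝓝 w, (fiberOn D₁ f w').ncard = (fiberOn D₁ f w).ncard := by
  have hfin := finite_fiberOn hD₁o hf hproper hw hreg
  have han : AnalyticOnNhd ℂ f D₁ := hf.analyticOnNhd hD₁o
  obtain ⟨U, hU, hdisj⟩ := hfin.t2_separation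
  have hV : ∀ z, ∃ V : Set ℂ, z ∈ fiberOn D₁ f w → IsOpen V ∧ z ∈ V ∧ Set.InjOn f V := by
    intro z
    by_cases hz : z ∈ fiberOn D₁ f w
    · obtain ⟨V, h⟩ := exists_isOpen_injOn (han z hz.1) (hreg z hz)
      exact ⟨V, fun _ => h⟩
    · exact ⟨∅, fun h => absurd h hz⟩
  choose V hV using hV
  set W : ℂ → Set ℂ := fun z => U z ∩ V z ∩ D₁ with hWdef
  have hWo : ∀ z ∈ fiberOn D₁ f w, IsOpen (W z) := fun z hz =>
    ((hU z).2.inter (hV z hz).1).inter hD₁o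
  have hzW : ∀ z ∈ fiberOn D₁ f w, z ∈ W z := fun z hz => ⟨⟨(hU z).1, (hV z hz).2.1⟩, hz.1⟩
  have hev1 : ∀ᶠ w' in 𝓝 w, ∀ z ∈ fiberOn D₁ f w, w' ∈ f '' W z := by
    rw [Filter.eventually_all_finite hfin]
    intro z hz
    have hm := (han z hz.1).hasStrictDerivAt.map_nhds_eq (hreg z hz)
    have hfz : f z = w := hz.2
    rw [hfz] at hm
    rw [← hm]
    exact Filter.image_mem_map ((hWo z hz).mem_nhds (hzW z hz))
  -- The part of `f⁻¹(K)` away from the chosen neighbourhoods has a compact image missing `w`.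
  have hev2 : ∀ᶠ w' in 𝓝 w, fiberOn D₁ f w' ⊆ ⋃ z ∈ fiberOn D₁ f w, W z := by
    obtain ⟨r, hr, hrD⟩ := Metric.nhds_basis_closedBall.mem_iff.1 (hD₂o.mem_nhds hw)
    have hK := hproper _ hrD (isCompact_closedBall w r)
    have hL : IsCompact ((D₁ ∩ f ⁻¹' closedBall w r) \ ⋃ z ∈ fiberOn D₁ f w, W z) :=
      hK.diff (isOpen_biUnion hWo)
    have hfL := hL.image_of_continuousOn
      (hf.continuousOn.mono (Set.sdiff_subset.trans Set.inter_subset_left))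
    have hwL : w ∉ f '' ((D₁ ∩ f ⁻¹' closedBall w r) \ ⋃ z ∈ fiberOn D₁ f w, W z) := by
      rintro ⟨z, ⟨⟨hz1, -⟩, hz2⟩, hzw⟩
      exact hz2 (Set.mem_biUnion (show z ∈ fiberOn D₁ f w from ⟨hz1, hzw⟩) (hzW z ⟨hz1, hzw⟩))
    filter_upwards [hfL.isClosed.isOpen_compl.mem_nhds hwL, closedBall_mem_nhds w hr]
      with w' h1 h2 z hz
    by_contra hcon
    have hzw : f z = w' := hz.2
    refine h1 ⟨z, ⟨⟨hz.1, ?_⟩, hcon⟩, hz.2⟩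
    simpa [hzw] using h2
  filter_upwards [hev1, hev2] with w' h1 h2
  choose! j hjW hjf using h1
  symm
  refine Set.ncard_congr (fun z _ => j z) (fun z hz => ⟨(hjW z hz).2, hjf z hz⟩) ?_ ?_
  · intro z z' hz hz' heq
    by_contra hne
    refine Set.disjoint_left.1 (hdisj hz hz' hne) (hjW z hz).1.1 ?_
    have := (hjW z' hz').1.1
    rwa [← show j z = j z' from heq] at this
  · intro y hy
    obtain ⟨z, hz, hyz⟩ := Set.mem_iUnion₂.1 (h2 hy)
    refine ⟨z, hz, (hV z hz).2.2 (hjW z hz).1.2 hyz.1.2 ?_⟩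
    rw [hjf z hz]
    exact (show f y = w' from hy.2).symm

/-- A disc minus a countable set is connected, being a continuous image of the plane minus a
countable set. -/
lemma isPreconnected_ball_diff_countable {S : Set ℂ} (hS : S.Countable) (c : ℂ) {r : ℝ}
    (hr : 0 < r) : IsPreconnected (ball c r \ S) := by
  set e := OpenPartialHomeomorph.univBall (E := ℂ) c r with he
  have hsrc : e.source = Set.univ := OpenPartialHomeomorph.univBall_source c r
  have htgt : e.target = ball c r := OpenPartialHomeomorph.univBall_target c hr
  have hinj : Function.Injective e := by
    rw [← Set.injOn_univ, ← hsrc]; exact e.injOn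
  have hrange : Set.range e = ball c r := by
    rw [← Set.image_univ, ← hsrc, e.image_source_eq_target, htgt]
  have hcount : (e ⁻¹' S).Countable := hS.preimage_of_injOn hinj.injOn
  have h := (hcount.isConnected_compl_of_one_lt_rank (by simp)).isPreconnected.image e
    (OpenPartialHomeomorph.continuous_univBall c r).continuousOn
  rwa [← Set.preimage_compl, Set.image_preimage_eq_inter_range, hrange, Set.inter_comm,
    ← Set.sdiff_eq] at h

/-- A locally constant function on a connected open set minus a countable set is constant, since
removing countably many points does not disconnect discs. -/
lemma exists_eq_of_locally_eq_off_countable {D S : Set ℂ} (hDo : IsOpen D)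
    (hD : IsPreconnected D) (hS : S.Countable) (N : ℂ → ℕ)
    (hN : ∀ w ∈ D \ S, ∀ᶠ w' in 𝓝 w, N w' = N w) : ∃ m, ∀ w ∈ D \ S, N w = m := by
  have hdense : Dense Sᶜ := hS.dense_compl ℝ
  have hloc : ∀ x ∈ D, ∃ m, ∀ᶠ y in 𝓝 x, y ∉ S → N y = m := by
    intro x hx
    obtain ⟨r, hr, hrD⟩ := Metric.isOpen_iff.1 hDo x hx
    obtain ⟨y₀, hy₀, hy₀S⟩ :=
      hdense.inter_open_nonempty (ball x r) isOpen_ball ⟨x, mem_ball_self hr⟩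
    refine ⟨N y₀, ?_⟩
    filter_upwards [ball_mem_nhds x hr] with y hy hyS
    refine (isPreconnected_ball_diff_countable hS x hr).constant (f := N) ?_ ⟨hy, hyS⟩
      ⟨hy₀, hy₀S⟩
    intro v hv
    have : ContinuousAt N v := by
      rw [ContinuousAt, nhds_discrete ℕ, Filter.tendsto_pure]
      exact hN v ⟨hrD hv.1, hv.2⟩
    exact this.continuousWithinAt
  choose! M hM using hloc
  have hMc : ContinuousOn M D := by
    intro x hx
    have : ContinuousAt M x := by
      rw [ContinuousAt, nhds_discrete ℕ, Filter.tendsto_pure]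
      filter_upwards [(hM x hx).eventually_nhds, hDo.mem_nhds hx] with y hy hyD
      obtain ⟨O, hOsub, hOo, hyO⟩ := _root_.mem_nhds_iff.1 (hy.and (hM y hyD))
      obtain ⟨v, hvO, hvS⟩ := hdense.inter_open_nonempty O hOo ⟨y, hyO⟩
      rw [← (hOsub hvO).1 hvS, ← (hOsub hvO).2 hvS]
    exact this.continuousWithinAt
  rcases D.eq_empty_or_nonempty with rfl | ⟨x₀, hx₀⟩
  · exact ⟨0, fun w hw => hw.1.elim⟩
  · refine ⟨M x₀, fun w hw => ?_⟩
    rw [(hM w hw.1).self_of_nhds hw.2]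
    exact hD.constant hMc hw.1 hx₀

/-- Multiplication by `a`, as a real linear map of the plane, has determinant `|a|²`. -/
lemma abs_det_restrictScalars_toSpanSingleton (a : ℂ) :
    |((ContinuousLinearMap.toSpanSingleton ℂ a).restrictScalars ℝ).det| = ‖a‖ ^ 2 := by
  simp [ContinuousLinearMap.det, LinearMap.det_restrictScalars, Algebra.norm_complex_eq,
    Complex.normSq_eq_norm_sq]

/-- If the sets `A k` are disjoint, then at most as many images `f '' A k` contain `w` as there are
points in the fibre over `w`. -/
lemma tsum_indicator_image_le {D : Set ℂ} {f : ℂ → ℂ} {A : ℕ → Set ℂ}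
    (hAm : ∀ k, MeasurableSet (A k)) (hAd : Pairwise (Function.onFun Disjoint A))
    (hAD : ∀ k, A k ⊆ D) {w : ℂ} (hfin : (fiberOn D f w).Finite) :
    ∑' k, (f '' A k).indicator (fun _ => (1 : ENNReal)) w ≤ ((fiberOn D f w).ncard : ENNReal) := by
  have hF : MeasurableSet (fiberOn D f w) := hfin.measurableSet
  calc ∑' k, (f '' A k).indicator (fun _ => (1 : ENNReal)) w
      ≤ ∑' k, Measure.count (fiberOn D f w ∩ A k) := by
        refine ENNReal.tsum_le_tsum fun k => ?_
        by_cases hw : w ∈ f '' A k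
        · obtain ⟨z, hz, hzw⟩ := hw
          rw [Set.indicator_of_mem (show w ∈ f '' A k from ⟨z, hz, hzw⟩), ← Measure.count_singleton z]
          exact measure_mono (Set.singleton_subset_iff.2 ⟨⟨hAD k hz, hzw⟩, hz⟩)
        · rw [Set.indicator_of_notMem hw]; exact zero_le
    _ = Measure.count (⋃ k, fiberOn D f w ∩ A k) := by
        rw [measure_iUnion (fun i j hij => (hAd hij).mono Set.inter_subset_right
          Set.inter_subset_right) fun k => hF.inter (hAm k)]
    _ ≤ Measure.count (fiberOn D f w) := measure_mono (Set.iUnion_subset fun _ =>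
        Set.inter_subset_left)
    _ = ((fiberOn D f w).ncard : ENNReal) := by
        rw [Measure.count_apply_finite _ hfin, Set.ncard_eq_toFinset_card _ hfin]

/-- Change of variables for a holomorphic map whose fibres have at most `m` points outside a null
set: cut the set of regular points into countably many pieces on which `f` is injective, and sum. -/
lemma integrableOn_pullback_of_ncard_le {D₁ D₂ S : Set ℂ} (hD₁o : IsOpen D₁)
    {f : ℂ → ℂ} (hf : DifferentiableOn ℂ f D₁) (hmaps : Set.MapsTo f D₁ D₂)
    (hreg : ∃ z ∈ D₁, deriv f z ≠ 0) (hD₂o : IsOpen D₂) (hS : S.Countable) (m : ℕ)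
    (hfin : ∀ w ∈ D₂ \ S, (fiberOn D₁ f w).Finite)
    (hm : ∀ w ∈ D₂ \ S, (fiberOn D₁ f w).ncard = m)
    {g : ℂ → ℝ} (hg : IntegrableOn g D₂ volume) :
    IntegrableOn (fun z => ‖deriv f z‖ ^ 2 * g (f z)) {z ∈ D₁ | deriv f z ≠ 0} volume := by
  have han : AnalyticOnNhd ℂ f D₁ := hf.analyticOnNhd hD₁o
  set R : Set ℂ := {z ∈ D₁ | deriv f z ≠ 0} with hR
  have hRo : IsOpen R := by
    have := (han.deriv.continuousOn).isOpen_inter_preimage hD₁o (isOpen_compl_singleton (x := 0))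
    exact this
  have hV : ∀ z, ∃ V : Set ℂ, z ∈ R → IsOpen V ∧ z ∈ V ∧ Set.InjOn f V := by
    intro z
    by_cases hz : z ∈ R
    · obtain ⟨V, h⟩ := exists_isOpen_injOn (han z hz.1) hz.2
      exact ⟨V, fun _ => h⟩
    · exact ⟨∅, fun h => absurd h hz⟩
  choose V hV using hV
  obtain ⟨t, htR, htc, htcov⟩ := TopologicalSpace.countable_cover_nhdsWithin (f := V) (s := R)
    fun z hz => mem_nhdsWithin_of_mem_nhds ((hV z hz).1.mem_nhds (hV z hz).2.1)
  have htne : t.Nonempty := by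
    obtain ⟨z, hz⟩ := hreg
    obtain ⟨x, hx, -⟩ := Set.mem_iUnion₂.1 (htcov hz)
    exact ⟨x, hx⟩
  obtain ⟨e, rfl⟩ := htc.exists_eq_range htne
  have heR : ∀ k, e k ∈ R := fun k => htR ⟨k, rfl⟩
  -- Lindelöf gives countably many neighbourhoods of injectivity; `disjointed` makes them disjoint.
  set B : ℕ → Set ℂ := fun k => V (e k) ∩ R with hB
  set A : ℕ → Set ℂ := disjointed B with hA
  have hAB : ∀ k, A k ⊆ B k := fun k => disjointed_le B k
  have hAR : ∀ k, A k ⊆ R := fun k => (hAB k).trans Set.inter_subset_right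
  have hAm : ∀ k, MeasurableSet (A k) := fun k =>
    MeasurableSet.disjointed (fun k => ((hV _ (heR k)).1.inter hRo).measurableSet) k
  have hAd : Pairwise (Function.onFun Disjoint A) := disjoint_disjointed B
  have hAU : ⋃ k, A k = R := by
    rw [hA, iUnion_disjointed]
    refine (Set.iUnion_subset fun k => Set.inter_subset_right).antisymm fun z hz => ?_
    obtain ⟨_, ⟨k, rfl⟩, hx⟩ := Set.mem_iUnion₂.1 (htcov hz)
    exact Set.mem_iUnion.2 ⟨k, hx, hz⟩
  have hAinj : ∀ k, Set.InjOn f (A k) := fun k =>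
    (hV _ (heR k)).2.2.mono ((hAB k).trans Set.inter_subset_left)
  have hder : ∀ k, ∀ z ∈ A k, HasFDerivWithinAt f
      ((ContinuousLinearMap.toSpanSingleton ℂ (deriv f z)).restrictScalars ℝ) (A k) z := by
    intro k z hz
    have := (hf.differentiableAt (hD₁o.mem_nhds (hAR k hz).1)).hasDerivAt.hasFDerivAt
    exact (this.restrictScalars ℝ).hasFDerivWithinAt
  have himD : ∀ k, f '' A k ⊆ D₂ := fun k =>
    Set.image_subset_iff.2 fun z hz => hmaps (hAR k hz).1
  have himm : ∀ k, MeasurableSet (f '' A k) := fun k =>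
    measurable_image_of_fderivWithin (hAm k) (hder k) (hAinj k)
  have hint : ∀ k, IntegrableOn (fun z => ‖deriv f z‖ ^ 2 * g (f z)) (A k) volume := by
    intro k
    have := (integrableOn_image_iff_integrableOn_abs_det_fderiv_smul volume (hAm k) (hder k)
      (hAinj k) g).1 (hg.mono_set (himD k))
    simpa only [abs_det_restrictScalars_toSpanSingleton, smul_eq_mul] using this
  refine ⟨?_, ?_⟩
  · rw [← hAU, aestronglyMeasurable_iUnion_iff]
    exact fun k => (hint k).1
  rw [hasFiniteIntegral_iff_enorm, ← hAU, lintegral_iUnion hAm hAd]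
  have hpiece : ∀ k, ∫⁻ z in A k, ‖‖deriv f z‖ ^ 2 * g (f z)‖ₑ
      = ∫⁻ w in D₂, (f '' A k).indicator (fun w => ‖g w‖ₑ) w := by
    intro k
    rw [lintegral_indicator (himm k), Measure.restrict_restrict (himm k),
      Set.inter_eq_left.2 (himD k),
      lintegral_image_eq_lintegral_abs_det_fderiv_mul volume (hAm k) (hder k) (hAinj k)]
    refine lintegral_congr fun z => ?_
    rw [abs_det_restrictScalars_toSpanSingleton, enorm_mul, Real.enorm_of_nonneg (by positivity)]
  simp_rw [hpiece]
  rw [← lintegral_tsum fun k => hg.1.enorm.indicator (himm k)]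
  have hSnull : ∀ᵐ w ∂(volume.restrict D₂), w ∉ S :=
    ae_restrict_of_ae (measure_eq_zero_iff_ae_notMem.1 (hS.measure_zero volume))
  calc ∫⁻ w in D₂, ∑' k, (f '' A k).indicator (fun w => ‖g w‖ₑ) w
      ≤ ∫⁻ w in D₂, (m : ENNReal) * ‖g w‖ₑ := by
        refine lintegral_mono_ae ?_
        filter_upwards [hSnull, ae_restrict_mem hD₂o.measurableSet] with w hwS hwD
        have h1 : ∀ k, (f '' A k).indicator (fun w => ‖g w‖ₑ) w
            = (f '' A k).indicator (fun _ => (1 : ENNReal)) w * ‖g w‖ₑ := by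
          intro k
          by_cases h : w ∈ f '' A k <;> simp [h]
        simp_rw [h1]
        rw [ENNReal.tsum_mul_right]
        gcongr
        rw [← hm w ⟨hwD, hwS⟩]
        exact tsum_indicator_image_le hAm hAd (fun k => (hAR k).trans (Set.sep_subset _ _))
          (hfin w ⟨hwD, hwS⟩)
    _ = (m : ENNReal) * ∫⁻ w in D₂, ‖g w‖ₑ := lintegral_const_mul' _ _ (ENNReal.natCast_ne_top m)
    _ < ⊤ := ENNReal.mul_lt_top (ENNReal.natCast_lt_top m) (hasFiniteIntegral_iff_enorm.1 hg.2)

/-- If `u` belongs to the weighted reduced Bergman space `𝒟^ν(D₂)` with primitive `U`,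
then `f'·(u ∘ f)` belongs to `𝒟^{ν∘f}(D₁)`, with primitive `U ∘ f`. -/
theorem pullback_mem_weighted_reduced_bergman (D₁ D₂ : Set ℂ)
    (hD₁o : IsOpen D₁) (hD₁c : IsConnected D₁) (hD₁b : Bornology.IsBounded D₁)
    (hD₂o : IsOpen D₂) (hD₂c : IsConnected D₂) (hD₂b : Bornology.IsBounded D₂)
    (f : ℂ → ℂ) (hf : DifferentiableOn ℂ f D₁) (hmaps : Set.MapsTo f D₁ D₂)
    (hproper : ∀ K : Set ℂ, K ⊆ D₂ → IsCompact K → IsCompact (D₁ ∩ f ⁻¹' K))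
    (ν : ℂ → ℝ) (hν : IsWeight D₂ ν)
    (u U : ℂ → ℂ) (hu : DifferentiableOn ℂ u D₂)
    (hU : DifferentiableOn ℂ U D₂) (hU' : ∀ w ∈ D₂, HasDerivAt U (u w) w)
    (huint : IntegrableOn (fun w => ‖u w‖ ^ 2 * ν w) D₂ volume) :
    DifferentiableOn ℂ (fun z => deriv f z * u (f z)) D₁ ∧
      (∀ z ∈ D₁, HasDerivAt (fun x => U (f x)) (deriv f z * u (f z)) z) ∧
      IntegrableOn (fun z => ‖deriv f z * u (f z)‖ ^ 2 * ν (f z)) D₁ volume := by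
  have hchain : ∀ z ∈ D₁, HasDerivAt (fun x => U (f x)) (deriv f z * u (f z)) z := by
    intro z hz
    have h := (hU' (f z) (hmaps hz)).comp z (hf.differentiableAt (hD₁o.mem_nhds hz)).hasDerivAt
    rwa [mul_comm] at h
  have han : AnalyticOnNhd ℂ f D₁ := hf.analyticOnNhd hD₁o
  refine ⟨(han.deriv.differentiableOn).mul (hu.comp hf hmaps), hchain, ?_⟩
  have heq : (fun z => ‖deriv f z * u (f z)‖ ^ 2 * ν (f z))
      = fun z => ‖deriv f z‖ ^ 2 * (fun w => ‖u w‖ ^ 2 * ν w) (f z) := by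
    funext z
    simp only [norm_mul]
    ring
  rw [heq]
  by_cases hreg : ∃ z ∈ D₁, deriv f z ≠ 0
  · obtain ⟨z₀, hz₀, hz₀'⟩ := hreg
    set C : Set ℂ := deriv f ⁻¹' {0} ∩ D₁ with hC
    have hCc : C.Countable := (HereditarilyLindelofSpace.isLindelof C).countable_of_isDiscrete
      (isDiscrete_of_codiscreteWithin
        (han.deriv.preimage_zero_mem_codiscreteWithin hz₀' hz₀ hD₁c))
    have hSc : (f '' C).Countable := hCc.image f
    have hregw : ∀ w ∈ D₂ \ f '' C, ∀ z ∈ fiberOn D₁ f w, deriv f z ≠ 0 :=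
      fun w hw z hz h0 => hw.2 ⟨z, ⟨h0, hz.1⟩, hz.2⟩
    obtain ⟨m, hm⟩ := exists_eq_of_locally_eq_off_countable hD₂o hD₂c.isPreconnected hSc
      (fun w => (fiberOn D₁ f w).ncard) fun w hw =>
        eventually_ncard_fiberOn_eq hD₁o hD₂o hf hproper hw.1 (hregw w hw)
    have hint := integrableOn_pullback_of_ncard_le hD₁o hf hmaps ⟨z₀, hz₀, hz₀'⟩ hD₂o hSc m
      (fun w hw => finite_fiberOn hD₁o hf hproper hw.1 (hregw w hw)) hm huint
    -- The critical points form a null set.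
    have hsplit : D₁ ⊆ {z ∈ D₁ | deriv f z ≠ 0} ∪ C := by
      intro z hz
      by_cases h : deriv f z = 0
      · exact Or.inr ⟨h, hz⟩
      · exact Or.inl ⟨hz, h⟩
    exact (hint.union (IntegrableOn.of_measure_zero (hCc.measure_zero volume))).mono_set hsplit
  · push Not at hreg
    refine (integrableOn_zero (μ := volume) (s := D₁)).congr_fun ?_ hD₁o.measurableSet
    intro z hz
    simp [hreg z hz]
end
end

section
/- Let D₁ and D₂ be bounded domains in ℂ, let f : D₁ → D₂ be a proper holomorphic map, and let ν be a weight on D₂. If v belongs to the weighted reduced Bergman space 𝒟^{ν∘f}(D₁), then any holomorphic function g on D₂ satisfying g(w) = ∑_{z ∈ f⁻¹(w)} v(z)/f′(z) for all non-critical values w of f, together with ∫_{D₂} |g|² ν dA < ∞, belongs to 𝒟^ν(D₂); in particular g has a primitive on D₂. -/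
/-!
Only the existence of a primitive of `g` on `D₂` has to be shown. If `v = V'` on `D₁`, the
candidate is the sum over the fibres `G w = ∑_{z ∈ f⁻¹(w)} V z`.

Near a non-critical value `w₀` the fibre is finite, `f` has a local inverse `s_z` at each point `z`
of it, and properness forces the fibre over a nearby `w` to be exactly the set of the distinct
points `s_z w`; differentiating `∑ V (s_z w)` gives `G' = ∑ v / f' = g`
(`hasDerivAt_fiberSum`).

The map `f` is not constant, since otherwise `D₁` would be compact and open. So its critical points
are isolated and, by properness, its critical values are isolated in `D₂`
(`eventually_noncritical`). On a small disc about any `w₀ ∈ D₂` the holomorphic function `g` has a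
primitive `H`, and `G - H` has zero derivative on the punctured disc, which is connected, so
`G = H + c` there. Hence the limits of `G` on punctured neighbourhoods exist and define a primitive
of `g` on `D₂` (`hasPrimitiveOn_of_isolated`). The sum `G` needs no multiplicities, as its values
at critical values are discarded.
-/

open MeasureTheory Complex Metric

noncomputable section

/-- `u` has a holomorphic primitive on `D`. -/
def HasPrimitiveOn (u : ℂ → ℂ) (D : Set ℂ) : Prop :=
  ∃ g : ℂ → ℂ, DifferentiableOn ℂ g D ∧ ∀ z ∈ D, HasDerivAt g (u z) z

/-- `u` belongs to the weighted reduced Bergman space of `D` with weight `ν`. -/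
def MemWeightedReducedBergman (D : Set ℂ) (ν : ℂ → ℝ) (u : ℂ → ℂ) : Prop :=
  DifferentiableOn ℂ u D ∧ HasPrimitiveOn u D ∧
    IntegrableOn (fun z => ‖u z‖ ^ 2 * ν z) D volume

open Filter Topology

/-- The punctured disc is the image of a half plane under `z ↦ c + exp z`. -/
lemma isPreconnected_punctured_ball (c : ℂ) {r : ℝ} (hr : 0 < r) :
    IsPreconnected (ball c r \ {c}) := by
  have h : ball c r \ {c} = (fun z => c + Complex.exp z) '' {z : ℂ | z.re < Real.log r} := by
    ext w
    simp only [Set.mem_sdiff, mem_ball, dist_eq_norm, Set.mem_singleton_iff, Set.mem_image,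
      Set.mem_ofPred_eq]
    constructor
    · rintro ⟨h1, h2⟩
      have h3 : w - c ≠ 0 := sub_ne_zero.2 h2
      refine ⟨Complex.log (w - c), ?_, ?_⟩
      · rw [Complex.log_re]
        exact Real.log_lt_log (norm_pos_iff.2 h3) h1
      · rw [Complex.exp_log h3]; ring
    · rintro ⟨z, hz, rfl⟩
      refine ⟨?_, ?_⟩
      · rw [add_sub_cancel_left, Complex.norm_exp]
        exact (Real.lt_log_iff_exp_lt hr).1 hz
      · simp [Complex.exp_ne_zero]
  rw [h]
  exact (convex_halfSpace_re_lt _).isPreconnected.image _ (by fun_prop)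

/-- A holomorphic function with a primitive `G` off a set that is discrete and closed in `D` has a
primitive on all of `D`. -/
lemma hasPrimitiveOn_of_isolated {D : Set ℂ} (hD : IsOpen D) {g G : ℂ → ℂ}
    (hg : DifferentiableOn ℂ g D)
    (hG : ∀ w₀ ∈ D, ∀ᶠ w in 𝓝[≠] w₀, HasDerivAt G (g w) w) : HasPrimitiveOn g D := by
  have key : ∀ w₀ ∈ D, HasDerivAt (fun w => limUnder (𝓝[≠] w) G) (g w₀) w₀ := by
    intro w₀ hw₀
    obtain ⟨r₁, hr₁, h₁⟩ := Metric.isOpen_iff.1 hD w₀ hw₀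
    have h2 := hG w₀ hw₀
    rw [eventually_nhdsWithin_iff, Metric.eventually_nhds_iff_ball] at h2
    obtain ⟨r₂, hr₂, h₂⟩ := h2
    set r := min r₁ r₂ with hr
    have hr0 : 0 < r := lt_min hr₁ hr₂
    obtain ⟨H, hH⟩ := (hg.mono ((ball_subset_ball (min_le_left _ _)).trans h₁) :
      DifferentiableOn ℂ g (ball w₀ r)).isExactOn_ball
    have hPo : IsOpen (ball w₀ r \ {w₀}) := isOpen_ball.sdiff isClosed_singleton
    have hGd : ∀ w ∈ ball w₀ r \ {w₀}, HasDerivAt G (g w) w := fun w hw =>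
      h₂ w (ball_subset_ball (min_le_right _ _) hw.1) hw.2
    obtain ⟨c, hc⟩ := hPo.exists_eq_add_of_deriv_eq (f := G) (g := H)
      (isPreconnected_punctured_ball w₀ hr0)
      (fun w hw => (hGd w hw).differentiableAt.differentiableWithinAt)
      (fun w hw => (hH w hw.1).differentiableAt.differentiableWithinAt)
      (fun w hw => by rw [(hGd w hw).deriv, (hH w hw.1).deriv])
    have hlim : ∀ w ∈ ball w₀ r, limUnder (𝓝[≠] w) G = H w + c := by
      intro w hw
      refine Tendsto.limUnder_eq ?_
      have hcont : Tendsto (fun x => H x + c) (𝓝[≠] w) (𝓝 (H w + c)) :=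
        (((hH w hw).continuousAt.add continuousAt_const).tendsto).mono_left nhdsWithin_le_nhds
      refine hcont.congr' ?_
      have hP : ∀ᶠ x in 𝓝[≠] w, x ∈ ball w₀ r \ {w₀} := by
        refine ((isOpen_ball.eventually_mem hw).filter_mono nhdsWithin_le_nhds).and ?_
        by_cases h : w = w₀
        · subst h; exact self_mem_nhdsWithin
        · exact (isOpen_ne.eventually_mem h).filter_mono nhdsWithin_le_nhds
      filter_upwards [hP] with x hx using (hc hx).symm
    refine ((hH w₀ (mem_ball_self hr0)).add_const c).congr_of_eventuallyEq ?_
    filter_upwards [ball_mem_nhds w₀ hr0] with w hw using hlim w hw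
  exact ⟨_, fun w hw => (key w hw).differentiableAt.differentiableWithinAt, key⟩

/-- The critical values of a proper holomorphic map are isolated in the target. -/
lemma eventually_noncritical {D₁ D₂ : Set ℂ}
    (hD₁o : IsOpen D₁) (hD₁c : IsConnected D₁) (hD₂o : IsOpen D₂)
    {f : ℂ → ℂ} (hf : DifferentiableOn ℂ f D₁) (hmaps : Set.MapsTo f D₁ D₂)
    (hproper : ∀ K : Set ℂ, K ⊆ D₂ → IsCompact K → IsCompact (D₁ ∩ f ⁻¹' K))
    {w₀ : ℂ} (hw₀ : w₀ ∈ D₂) :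
    ∀ᶠ w in 𝓝[≠] w₀, ∀ z ∈ D₁, f z = w → deriv f z ≠ 0 := by
  have hA : AnalyticOnNhd ℂ (deriv f) D₁ := (hf.analyticOnNhd hD₁o).deriv
  have hne : ¬ Set.EqOn (deriv f) 0 D₁ := by
    intro h0
    obtain ⟨c, hc⟩ := hD₁o.exists_is_const_of_deriv_eq_zero hD₁c.isPreconnected hf h0
    obtain ⟨z₁, hz₁⟩ := hD₁c.nonempty
    have hcomp := hproper {c} (by
      rw [Set.singleton_subset_iff, ← hc z₁ hz₁]; exact hmaps hz₁) isCompact_singleton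
    have heq : D₁ ∩ f ⁻¹' {c} = D₁ := Set.inter_eq_left.2 fun z hz => hc z hz
    rw [heq] at hcomp
    -- a nonempty clopen subset of `ℂ` is everything, and `ℂ` is not compact
    have huniv : D₁ = Set.univ := IsClopen.eq_univ ⟨hcomp.isClosed, hD₁o⟩ ⟨z₁, hz₁⟩
    exact noncompact_univ ℂ (huniv ▸ hcomp)
  obtain ⟨r, hr, hrD⟩ := nhds_basis_closedBall.mem_iff.1 (hD₂o.mem_nhds hw₀)
  have hK := hproper _ hrD (isCompact_closedBall w₀ r)
  set Z := {z | z ∈ D₁ ∩ f ⁻¹' closedBall w₀ r ∧ deriv f z = 0} with hZ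
  have hfin : Z.Finite := by
    by_contra hinf
    obtain ⟨x, hx, hacc⟩ := Set.Infinite.exists_accPt_of_subset_isCompact hinf hK
      (fun z hz => hz.1)
    rw [accPt_iff_frequently_nhdsNE] at hacc
    exact hne (hA.eqOn_zero_of_preconnected_of_frequently_eq_zero hD₁c.isPreconnected hx.1
      (hacc.mono fun z hz => hz.2))
  have hfin' : (f '' Z \ {w₀}).Finite := (hfin.image f).subset Set.sdiff_subset
  rw [eventually_nhdsWithin_iff]
  filter_upwards [closedBall_mem_nhds w₀ hr,
    hfin'.isClosed.isOpen_compl.mem_nhds (x := w₀) (by simp)] with w hw hw' hww₀ z hz hzw h0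
  exact hw' ⟨⟨z, ⟨⟨hz, by simpa [hzw] using hw⟩, h0⟩, hzw⟩, hww₀⟩

/-- At a non-critical value, the sum of `V` over the fibres of a proper holomorphic map `f` is
differentiable, with derivative the sum of `V' / f'` over the fibre. -/
lemma hasDerivAt_fiberSum {D₁ D₂ : Set ℂ} (hD₁o : IsOpen D₁) (hD₂o : IsOpen D₂)
    {f : ℂ → ℂ} (hf : DifferentiableOn ℂ f D₁)
    (hproper : ∀ K : Set ℂ, K ⊆ D₂ → IsCompact K → IsCompact (D₁ ∩ f ⁻¹' K))
    {V v : ℂ → ℂ} (hV : ∀ z ∈ D₁, HasDerivAt V (v z) z)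
    {w₀ : ℂ} (hw₀ : w₀ ∈ D₂) (hnc : ∀ z ∈ D₁, f z = w₀ → deriv f z ≠ 0) :
    HasDerivAt (fun w => ∑ᶠ z ∈ D₁ ∩ f ⁻¹' {w}, V z)
      (∑ᶠ z ∈ D₁ ∩ f ⁻¹' {w₀}, v z / deriv f z) w₀ := by
  have hloc : ∀ z : ℂ, ∃ s : ℂ → ℂ, z ∈ D₁ ∩ f ⁻¹' {w₀} →
      HasDerivAt s (deriv f z)⁻¹ w₀ ∧ s w₀ = z ∧ (∀ᶠ x in 𝓝 z, s (f x) = x) ∧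
        ∀ᶠ w in 𝓝 w₀, f (s w) = w := by
    intro z
    by_cases hz : z ∈ D₁ ∩ f ⁻¹' {w₀}
    · have hfz : f z = w₀ := hz.2
      have hst : HasStrictDerivAt f (deriv f z) z :=
        (hf.analyticOnNhd hD₁o z hz.1).hasStrictDerivAt
      have h0 := hnc z hz.1 hfz
      refine ⟨hst.localInverse f _ z h0, fun _ => ?_⟩
      have h1 := (hst.to_localInverse h0).hasDerivAt
      have h2 := hst.eventually_left_inverse h0
      have h3 := hst.eventually_right_inverse h0
      have h4 := h2.self_of_nhds
      rw [hfz] at h1 h3 h4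
      exact ⟨h1, h4, h2, h3⟩
    · exact ⟨id, fun h => absurd h hz⟩
  choose s hs using hloc
  have hfin : (D₁ ∩ f ⁻¹' {w₀}).Finite := by
    by_contra hinf
    obtain ⟨x, hx, hacc⟩ := Set.Infinite.exists_accPt_of_subset_isCompact hinf
      (hproper {w₀} (by simpa using hw₀) isCompact_singleton) subset_rfl
    rw [accPt_iff_frequently_nhdsNE] at hacc
    obtain ⟨-, hxw, hleft, -⟩ := hs x hx
    obtain ⟨y, hy, hyl, hyx⟩ := (hacc.and_eventually
      ((hleft.filter_mono nhdsWithin_le_nhds).and self_mem_nhdsWithin)).exists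
    have hyf : f y = w₀ := hy.2
    rw [hyf, hxw] at hyl
    exact hyx hyl.symm
  set F := hfin.toFinset with hF
  have hmem : ∀ {z}, z ∈ F ↔ z ∈ D₁ ∩ f ⁻¹' {w₀} := hfin.mem_toFinset
  -- properness confines the nearby fibres to the union of the domains of the local inverses
  have hsub : ∀ᶠ w in 𝓝 w₀, ∀ x ∈ D₁, f x = w → ∃ z ∈ F, s z w = x := by
    obtain ⟨r, hr, hrD⟩ := nhds_basis_closedBall.mem_iff.1 (hD₂o.mem_nhds hw₀)
    have hK := hproper _ hrD (isCompact_closedBall w₀ r)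
    set U : Set ℂ := ⋃ z ∈ F, interior {x | s z (f x) = x} with hU
    have hUo : IsOpen U := isOpen_biUnion fun _ _ => isOpen_interior
    have hL : IsCompact ((D₁ ∩ f ⁻¹' closedBall w₀ r) \ U) := hK.diff hUo
    have hfL : IsCompact (f '' ((D₁ ∩ f ⁻¹' closedBall w₀ r) \ U)) :=
      hL.image_of_continuousOn (hf.continuousOn.mono fun z hz => hz.1.1)
    have hw₀L : w₀ ∉ f '' ((D₁ ∩ f ⁻¹' closedBall w₀ r) \ U) := by
      rintro ⟨z, ⟨hz, hzU⟩, hzw⟩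
      have hzF : z ∈ D₁ ∩ f ⁻¹' {w₀} := ⟨hz.1, hzw⟩
      exact hzU (Set.mem_biUnion (hmem.2 hzF) (mem_interior_iff_mem_nhds.2 (hs z hzF).2.2.1))
    filter_upwards [closedBall_mem_nhds w₀ hr, hfL.isClosed.isOpen_compl.mem_nhds hw₀L]
      with w hw hwL x hx hxw
    have hxU : x ∈ U := by
      by_contra hxU
      exact hwL ⟨x, ⟨⟨hx, by simpa [hxw] using hw⟩, hxU⟩, hxw⟩
    obtain ⟨z, hz, hxz⟩ := Set.mem_iUnion₂.1 hxU
    have hxz' : s z (f x) = x :=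
      interior_subset (s := {x | s z (f x) = x}) hxz
    exact ⟨z, hz, hxw ▸ hxz'⟩
  have htend : ∀ z ∈ F, Tendsto (s z) (𝓝 w₀) (𝓝 z) := fun z hz => by
    have h := (hs z (hmem.1 hz)).1.continuousAt.tendsto
    rwa [(hs z (hmem.1 hz)).2.1] at h
  have hsup : ∀ᶠ w in 𝓝 w₀, ∀ z ∈ F, s z w ∈ D₁ ∩ f ⁻¹' {w} := by
    rw [eventually_all_finset]
    intro z hz
    filter_upwards [(htend z hz).eventually (hD₁o.mem_nhds (hmem.1 hz).1),
      (hs z (hmem.1 hz)).2.2.2] with w h1 h2 using ⟨h1, h2⟩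
  have hinj : ∀ᶠ w in 𝓝 w₀, ∀ z ∈ F, ∀ z' ∈ F, z ≠ z' → s z w ≠ s z' w := by
    rw [eventually_all_finset]
    intro z hz
    rw [eventually_all_finset]
    intro z' hz'
    by_cases h : z = z'
    · exact Eventually.of_forall fun w hne => absurd h hne
    · have hne := ((hs z (hmem.1 hz)).1.continuousAt.ne_iff_eventually_ne
        (hs z' (hmem.1 hz')).1.continuousAt).1 (by
          rwa [(hs z (hmem.1 hz)).2.1, (hs z' (hmem.1 hz')).2.1])
      filter_upwards [hne] with w hw _ using hw
  have hsum : (fun w => ∑ᶠ z ∈ D₁ ∩ f ⁻¹' {w}, V z) =ᶠ[𝓝 w₀] fun w => ∑ z ∈ F, V (s z w) := by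
    filter_upwards [hsub, hsup, hinj] with w h1 h2 h3
    have himg : D₁ ∩ f ⁻¹' {w} = (fun z => s z w) '' (F : Set ℂ) := by
      ext x
      constructor
      · rintro ⟨hx, hxw⟩
        exact h1 x hx hxw
      · rintro ⟨z, hz, rfl⟩
        exact h2 z hz
    have hI : Set.InjOn (fun z => s z w) (F : Set ℂ) := fun z hz z' hz' h => by
      by_contra hne
      exact h3 z hz z' hz' hne h
    rw [himg, finsum_mem_image hI, finsum_mem_coe_finset]
  have hval : ∑ᶠ z ∈ D₁ ∩ f ⁻¹' {w₀}, v z / deriv f z = ∑ z ∈ F, v z / deriv f z :=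
    finsum_mem_eq_finite_toFinset_sum _ hfin
  rw [hval]
  refine HasDerivAt.congr_of_eventuallyEq ?_ hsum
  refine HasDerivAt.fun_sum fun z hz => ?_
  obtain ⟨h1, h2, -, -⟩ := hs z (hmem.1 hz)
  rw [div_eq_mul_inv]
  refine HasDerivAt.comp w₀ ?_ h1
  rw [h2]
  exact hV z (hmem.1 hz).1

/-- If `v ∈ 𝒟^{ν∘f}(D₁)` and `g` is a holomorphic function on `D₂` agreeing with
`Λ₂ v (w) = ∑_{z ∈ f⁻¹(w)} v(z)/f'(z)` at non-critical values and with finite weighted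
square-integral, then `g ∈ 𝒟^ν(D₂)`; in particular `g` has a primitive on `D₂`. -/
theorem pushforward_mem_weighted_reduced_bergman (D₁ D₂ : Set ℂ)
    (hD₁o : IsOpen D₁) (hD₁c : IsConnected D₁) (hD₁b : Bornology.IsBounded D₁)
    (hD₂o : IsOpen D₂) (hD₂c : IsConnected D₂) (hD₂b : Bornology.IsBounded D₂)
    (f : ℂ → ℂ) (hf : DifferentiableOn ℂ f D₁) (hmaps : Set.MapsTo f D₁ D₂)
    (hproper : ∀ K : Set ℂ, K ⊆ D₂ → IsCompact K → IsCompact (D₁ ∩ f ⁻¹' K))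
    (ν : ℂ → ℝ) (hν : IsWeight D₂ ν)
    (v : ℂ → ℂ) (hv : MemWeightedReducedBergman D₁ (fun z => ν (f z)) v)
    (g : ℂ → ℂ) (hg : DifferentiableOn ℂ g D₂)
    (hgval : ∀ w ∈ D₂, (∀ z ∈ D₁, f z = w → deriv f z ≠ 0) →
      g w = ∑ᶠ z ∈ D₁ ∩ f ⁻¹' {w}, v z / deriv f z)
    (hgint : IntegrableOn (fun w => ‖g w‖ ^ 2 * ν w) D₂ volume) :
    MemWeightedReducedBergman D₂ ν g := by
  refine ⟨hg, ?_, hgint⟩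
  obtain ⟨-, ⟨V, -, hV⟩, -⟩ := hv
  refine hasPrimitiveOn_of_isolated hD₂o (G := fun w => ∑ᶠ z ∈ D₁ ∩ f ⁻¹' {w}, V z) hg ?_
  intro w₀ hw₀
  filter_upwards [eventually_noncritical hD₁o hD₁c hD₂o hf hmaps hproper hw₀,
    (hD₂o.eventually_mem hw₀).filter_mono nhdsWithin_le_nhds] with w hnc hw
  rw [hgval w hw hnc]
  exact hasDerivAt_fiberSum hD₁o hD₂o hf hproper hV hw hnc
end
end

section
/- (Bell) Let D be a bounded domain in ℂ and f : D → 𝔻 a proper holomorphic map onto the unit disc. Fix w ∈ 𝔻 and α ∈ ℕ, and let ξ₁, …, ξ_q denote the (finitely many, distinct) points of f⁻¹(w). Then there exist a positive integer s and constants c_{l,β} ∈ ℂ (1 ≤ l ≤ q, 0 ≤ β ≤ s), depending only on f, w and α, such that for every holomorphic h on D with ∫_D |h|² dA < ∞ and every holomorphic g on 𝔻 satisfying g(w′) = ∑_{z ∈ f⁻¹(w′)} h(z)/f′(z) for all w′ ∈ 𝔻 which are not critical values of f, one has g^{(α)}(w) = ∑_{l=1}^{q} ∑_{β=0}^{s}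 c_{l,β}·h^{(β)}(ξ_l), where g^{(α)} and h^{(β)} denote iterated complex derivatives. -/
/-!
A linear functional whose kernel contains the intersection of the kernels of finitely many linear
functionals is a linear combination of them. Applied on the vector space of pairs `(h, g)`, `g` the
transform of `h`, this reduces the claim to: if `h` vanishes to high enough order at every point of
`f⁻¹(w)`, then `g^{(α)}(w) = 0`.

The order required at a fiber point `ξ` is that of `f' * (f - w) ^ (α + 1)`, which is finite because
a proper holomorphic map is nowhere locally constant (`not_eventually_const`). Then
`‖h / f'‖ ≤ C * ‖f - w‖ ^ (α + 1)` near the fiber. By properness the fibers over points `w'` near `w`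
lie in this region (`eventually_fiber`), contain no critical point when `w' ≠ w`, and have a bounded
number of points (`exists_fiber_encard_le`). Hence `g(w') = O((w' - w) ^ (α + 1))` as `w' → w`
(`iteratedDeriv_transform_eq_zero`).
-/

open MeasureTheory Complex Metric

noncomputable section

open Filter Topology Set

/-! ### Cardinality of fibers -/

/-- A holomorphic function is at most `m`-to-one near a point where it takes its value with finite
multiplicity `m`: locally `f - f z₀ = a * φ ^ m` with `φ` injective. -/
lemma exists_nhds_fiber_encard_le {f : ℂ → ℂ} {z₀ : ℂ} (hf : AnalyticAt ℂ f z₀)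
    (hne : ¬ ∀ᶠ z in 𝓝 z₀, f z = f z₀) :
    ∃ n : ℕ, ∃ U ∈ 𝓝 z₀, ∀ w' : ℂ, (U ∩ f ⁻¹' {w'}).encard ≤ n := by
  have hF : AnalyticAt ℂ (fun z => f z - f z₀) z₀ := hf.sub analyticAt_const
  have hord : analyticOrderAt (fun z => f z - f z₀) z₀ ≠ ⊤ := by
    rw [Ne, analyticOrderAt_eq_top]
    simpa [sub_eq_zero] using hne
  obtain ⟨u, hu, hu0, hfu⟩ := hF.analyticOrderAt_ne_top.1 hord
  set m := analyticOrderNatAt (fun z => f z - f z₀) z₀ with hm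
  have hm0 : m ≠ 0 := by
    intro h0
    have := hfu.self_of_nhds
    simp [h0] at this
    exact hu0 this.symm
  set v : ℂ → ℂ := fun z => (u z / u z₀) ^ ((m : ℂ)⁻¹) with hv
  have hv1 : v z₀ = 1 := by simp [hv, hu0]
  have hva : AnalyticAt ℂ v z₀ := by
    refine AnalyticAt.cpow (hu.div analyticAt_const hu0) analyticAt_const ?_
    simp [hu0]
  have hvm : ∀ z, v z ^ m = u z / u z₀ := fun z => cpow_nat_inv_pow _ hm0
  set φ : ℂ → ℂ := fun z => (z - z₀) * v z with hφ
  have hφa : AnalyticAt ℂ φ z₀ := (analyticAt_id.sub analyticAt_const).mul hva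
  have hφd : HasDerivAt φ 1 z₀ := by
    have := ((hasDerivAt_id z₀).sub_const z₀).mul hva.differentiableAt.hasDerivAt
    rw [hv1] at this
    exact this.congr_deriv (by simp)
  have hφs : HasStrictDerivAt φ 1 z₀ := by
    have := hφa.hasStrictDerivAt
    rwa [hφd.deriv] at this
  have hinj : ∀ᶠ z in 𝓝 z₀, hφs.localInverse φ 1 z₀ one_ne_zero (φ z) = z :=
    (hφs.hasStrictFDerivAt_equiv one_ne_zero).eventually_left_inverse
  refine ⟨m, _, hinj.and hfu, fun w' => ?_⟩
  set S := {x | hφs.localInverse φ 1 z₀ one_ne_zero (φ x) = x ∧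
    f x - f z₀ = (x - z₀) ^ m • u x} ∩ f ⁻¹' {w'} with hS
  have hSinj : InjOn φ S := fun x hx y hy hxy => by
    rw [← hx.1.1, ← hy.1.1, hxy]
  have hsub : φ '' S ⊆ ((Polynomial.nthRoots m ((w' - f z₀) / u z₀)).toFinset : Set ℂ) := by
    rintro _ ⟨x, ⟨⟨-, hx⟩, hxw⟩, rfl⟩
    have hxw : f x = w' := hxw
    simp only [Finset.mem_coe, Multiset.mem_toFinset,
      Polynomial.mem_nthRoots (Nat.pos_of_ne_zero hm0)]
    rw [← hxw, hx, hφ]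
    simp only [mul_pow, hvm, smul_eq_mul]
    ring
  have hroots : (Polynomial.nthRoots m ((w' - f z₀) / u z₀)).toFinset.card ≤ m :=
    le_trans (Multiset.toFinset_card_le _) (Polynomial.card_nthRoots m _)
  calc S.encard = (φ '' S).encard := hSinj.encard_image.symm
    _ ≤ _ := encard_le_encard hsub
    _ = (((Polynomial.nthRoots m ((w' - f z₀) / u z₀)).toFinset.card : ℕ) : ℕ∞) :=
        encard_coe_eq_coe_finsetCard _
    _ ≤ m := Nat.cast_le.2 hroots

lemma exists_fiber_encard_le {f : ℂ → ℂ} {K : Set ℂ} (hK : IsCompact K)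
    (hf : ∀ z ∈ K, AnalyticAt ℂ f z) (hne : ∀ z ∈ K, ¬ ∀ᶠ y in 𝓝 z, f y = f z) :
    ∃ n : ℕ, ∀ w' : ℂ, (K ∩ f ⁻¹' {w'}).encard ≤ n := by
  let P : Set ℂ → Prop := fun K => ∃ n : ℕ, ∀ w' : ℂ, (K ∩ f ⁻¹' {w'}).encard ≤ n
  have h0 : P ∅ := ⟨0, fun w' => by simp⟩
  change P K
  refine IsCompact.induction_on hK h0 ?_ ?_ ?_
  · rintro s t hst ⟨n, hn⟩
    exact ⟨n, fun w' => (encard_le_encard (inter_subset_inter_left _ hst)).trans (hn w')⟩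
  · rintro s t ⟨n, hn⟩ ⟨k, hk⟩
    refine ⟨n + k, fun w' => ?_⟩
    rw [union_inter_distrib_right]
    refine (encard_union_le _ _).trans ?_
    push_cast
    exact add_le_add (hn w') (hk w')
  · intro z hz
    obtain ⟨n, U, hU, h⟩ := exists_nhds_fiber_encard_le (hf z hz) (hne z hz)
    exact ⟨U, mem_nhdsWithin_of_mem_nhds hU, n, h⟩

/-! ### Properness -/

/-- Properness on the disc: a property holding near every point of the fiber over `w` holds on all
nearby fibers. -/
lemma eventually_fiber {D : Set ℂ} {f : ℂ → ℂ} (hf : ContinuousOn f D)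
    (hproper : ∀ C : Set ℂ, C ⊆ ball (0 : ℂ) 1 → IsCompact C → IsCompact (D ∩ f ⁻¹' C))
    {w : ℂ} (hw : w ∈ ball (0 : ℂ) 1) {P : ℂ → Prop}
    (hP : ∀ ξ ∈ D ∩ f ⁻¹' {w}, ∀ᶠ z in 𝓝 ξ, P z) :
    ∀ᶠ w' in 𝓝 w, ∀ z ∈ D, f z = w' → P z := by
  obtain ⟨r, hr, hrb⟩ := nhds_basis_closedBall.mem_iff.1 (isOpen_ball.mem_nhds hw)
  have hK := hproper _ hrb (isCompact_closedBall w r)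
  set K := D ∩ f ⁻¹' closedBall w r with hKdef
  set A := {z | ∀ᶠ y in 𝓝 z, P y} with hA
  have hAo : IsOpen A := isOpen_setOfPred_eventually_nhds
  have himg : IsCompact (f '' (K \ A)) :=
    (hK.diff hAo).image_of_continuousOn (hf.mono fun z hz => hz.1.1)
  have hwn : w ∉ f '' (K \ A) := by
    rintro ⟨z, ⟨⟨hzD, -⟩, hzA⟩, hzw⟩
    exact hzA (hP z ⟨hzD, hzw⟩)
  filter_upwards [himg.isClosed.isOpen_compl.mem_nhds hwn, closedBall_mem_nhds w hr]
    with w' hw' hw'r z hzD hzw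
  by_contra hPz
  refine hw' ⟨z, ⟨⟨hzD, ?_⟩, fun hz : ∀ᶠ y in 𝓝 z, P y => hPz hz.self_of_nhds⟩, hzw⟩
  simpa [hzw] using hw'r

/-- A proper holomorphic map is nowhere locally constant: otherwise it would be constant and its
fiber `D` would be both compact and open. -/
lemma not_eventually_const {D : Set ℂ} (hDo : IsOpen D) (hDc : IsConnected D)
    {f : ℂ → ℂ} (hf : DifferentiableOn ℂ f D) (hmaps : MapsTo f D (ball (0 : ℂ) 1))
    (hproper : ∀ C : Set ℂ, C ⊆ ball (0 : ℂ) 1 → IsCompact C → IsCompact (D ∩ f ⁻¹' C))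
    {z : ℂ} (hz : z ∈ D) : ¬ ∀ᶠ y in 𝓝 z, f y = f z := by
  intro h
  have heq : EqOn f (fun _ => f z) D :=
    (hf.analyticOnNhd hDo).eqOn_of_preconnected_of_eventuallyEq analyticOnNhd_const
      hDc.isPreconnected hz h
  have hc : IsCompact D := by
    have := hproper {f z} (by simpa using hmaps hz) isCompact_singleton
    have hsub : D ⊆ f ⁻¹' {f z} := fun y hy => heq hy
    rwa [inter_eq_left.2 hsub] at this
  rcases isClopen_iff.1 ⟨hc.isClosed, hDo⟩ with h | h
  · exact hDc.nonempty.ne_empty h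
  · exact noncompact_univ ℂ (h ▸ hc)

lemma eventually_deriv_ne_zero {f : ℂ → ℂ} {ξ : ℂ} (hf : AnalyticAt ℂ f ξ)
    (hne : ¬ ∀ᶠ y in 𝓝 ξ, f y = f ξ) : ∀ᶠ z in 𝓝 ξ, f z ≠ f ξ → deriv f z ≠ 0 := by
  rcases hf.deriv.eventually_eq_zero_or_eventually_ne_zero with h0 | h0
  · refine absurd ?_ hne
    obtain ⟨ε, hε, hb⟩ := Metric.eventually_nhds_iff_ball.1 (h0.and hf.eventually_analyticAt)
    refine Metric.eventually_nhds_iff_ball.2 ⟨ε, hε, fun y hy => ?_⟩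
    exact isOpen_ball.is_const_of_deriv_eq_zero (convex_ball ξ ε).isPreconnected
      (fun x hx => (hb x hx).2.differentiableAt.differentiableWithinAt)
      (fun x hx => (hb x hx).1) hy (mem_ball_self hε)
  · filter_upwards [eventually_nhdsWithin_iff.1 h0] with z hz hzw
    exact hz fun hzξ => hzw (by rw [hzξ])

/-! ### The transform and its derivatives -/

/-- The space of pairs `(h, g)` with `h` holomorphic on `D`, `g` holomorphic on the disc and `g`
the transform of `h` off the critical values of `f`. Square integrability is not imposed on `h`. -/
def transformPairs (D : Set ℂ) (f : ℂ → ℂ)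
    (hfin : ∀ w' ∈ ball (0 : ℂ) 1, (D ∩ f ⁻¹' {w'}).Finite) :
    Submodule ℂ ((ℂ → ℂ) × (ℂ → ℂ)) where
  carrier := {x | DifferentiableOn ℂ x.1 D ∧ DifferentiableOn ℂ x.2 (ball (0 : ℂ) 1) ∧
    ∀ w' ∈ ball (0 : ℂ) 1, (∀ z ∈ D, f z = w' → deriv f z ≠ 0) →
      x.2 w' = ∑ᶠ z ∈ D ∩ f ⁻¹' {w'}, x.1 z / deriv f z}
  zero_mem' := by
    refine ⟨differentiableOn_const 0, differentiableOn_const 0, fun w' _ _ => ?_⟩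
    simp
  add_mem' := by
    rintro a b ⟨ha, ha', hab⟩ ⟨hb, hb', hbb⟩
    refine ⟨ha.add hb, ha'.add hb', fun w' hw' hc => ?_⟩
    simp only [Prod.fst_add, Prod.snd_add, Pi.add_apply, add_div]
    rw [hab w' hw' hc, hbb w' hw' hc, finsum_mem_add_distrib (hfin w' hw')]
  smul_mem' := by
    rintro c a ⟨ha, ha', hab⟩
    refine ⟨ha.const_smul c, ha'.const_smul c, fun w' hw' hc => ?_⟩
    simp only [Prod.smul_fst, Prod.smul_snd, Pi.smul_apply, mul_div_assoc, smul_eq_mul]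
    rw [hab w' hw' hc, mul_finsum_mem]

/-- If `h` vanishes to order at least that of `f' * (f - w) ^ (α + 1)` at every point of the fiber
over `w`, then the transform of `h` is `O((w' - w) ^ (α + 1))`, since the number of its summands
is bounded near `w`. -/
lemma iteratedDeriv_transform_eq_zero {D : Set ℂ} (hDo : IsOpen D)
    {f : ℂ → ℂ} (hf : DifferentiableOn ℂ f D)
    (hproper : ∀ C : Set ℂ, C ⊆ ball (0 : ℂ) 1 → IsCompact C → IsCompact (D ∩ f ⁻¹' C))
    (hne : ∀ z ∈ D, ¬ ∀ᶠ y in 𝓝 z, f y = f z)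
    {w : ℂ} (hw : w ∈ ball (0 : ℂ) 1) (α : ℕ)
    (hfin : (D ∩ f ⁻¹' {w}).Finite)
    {h g : ℂ → ℂ} (hg : DifferentiableOn ℂ g (ball (0 : ℂ) 1))
    (hhO : ∀ ξ ∈ D ∩ f ⁻¹' {w}, h =O[𝓝 ξ] fun z => deriv f z * (f z - w) ^ (α + 1))
    (hgh : ∀ w' ∈ ball (0 : ℂ) 1, (∀ z ∈ D, f z = w' → deriv f z ≠ 0) →
      g w' = ∑ᶠ z ∈ D ∩ f ⁻¹' {w'}, h z / deriv f z) :
    iteratedDeriv α g w = 0 := by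
  have hfa : AnalyticOnNhd ℂ f D := hf.analyticOnNhd hDo
  obtain ⟨r, hr, hrb⟩ := nhds_basis_closedBall.mem_iff.1 (isOpen_ball.mem_nhds hw)
  obtain ⟨N, hN⟩ := exists_fiber_encard_le (hproper _ hrb (isCompact_closedBall w r))
    (fun z hz => hfa z hz.1) (fun z hz => hne z hz.1)
  -- a uniform constant for the finitely many points of the fiber
  obtain ⟨C, hC0, hC⟩ : ∃ C : ℝ, 0 ≤ C ∧ ∀ ξ ∈ D ∩ f ⁻¹' {w},
      ∀ᶠ z in 𝓝 ξ, ‖h z‖ ≤ C * ‖deriv f z * (f z - w) ^ (α + 1)‖ := by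
    choose! c hc using fun ξ hξ => (hhO ξ hξ).bound
    obtain ⟨C, hC⟩ := (hfin.image c).bddAbove
    refine ⟨max C 0, le_max_right _ _, fun ξ hξ => ?_⟩
    filter_upwards [hc ξ hξ] with z hz
    exact hz.trans (by gcongr; exact (hC (mem_image_of_mem c hξ)).trans (le_max_left _ _))
  have hcrit : ∀ ξ ∈ D ∩ f ⁻¹' {w}, ∀ᶠ z in 𝓝 ξ, f z ≠ w → deriv f z ≠ 0 := by
    rintro ξ ⟨hξ, rfl⟩
    exact eventually_deriv_ne_zero (hfa ξ hξ) (hne ξ hξ)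
  have hev := eventually_fiber hf.continuousOn hproper hw
    (fun ξ hξ => (hC ξ hξ).and (hcrit ξ hξ))
  have hbound : ∀ᶠ w' in 𝓝[≠] w, ‖g w'‖ ≤ (N * C) * ‖(w' - w) ^ (α + 1)‖ := by
    filter_upwards [hev.filter_mono nhdsWithin_le_nhds, self_mem_nhdsWithin,
      mem_nhdsWithin_of_mem_nhds (closedBall_mem_nhds w hr)] with w' hw' hne' hw'r
    have hsub : D ∩ f ⁻¹' {w'} ⊆ (D ∩ f ⁻¹' closedBall w r) ∩ f ⁻¹' {w'} := by
      rintro z ⟨hz, hzw : f z = w'⟩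
      exact ⟨⟨hz, by simpa [hzw] using hw'r⟩, hzw⟩
    have hcard := (encard_le_encard hsub).trans (hN w')
    have hfin' : (D ∩ f ⁻¹' {w'}).Finite := finite_of_encard_le_coe hcard
    have hd : ∀ z ∈ D, f z = w' → deriv f z ≠ 0 := fun z hz hzw =>
      (hw' z hz hzw).2 (hzw ▸ hne')
    rw [hgh w' (hrb hw'r) hd, finsum_mem_eq_finite_toFinset_sum _ hfin']
    have hcard' : hfin'.toFinset.card ≤ N := by
      rw [hfin'.encard_eq_coe_toFinset_card] at hcard
      exact_mod_cast hcard
    calc _ ≤ ∑ z ∈ hfin'.toFinset, C * ‖(w' - w) ^ (α + 1)‖ := by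
          refine norm_sum_le_of_le _ fun z hz => ?_
          obtain ⟨hzD, hzw : f z = w'⟩ := hfin'.mem_toFinset.1 hz
          have hpos : 0 < ‖deriv f z‖ := norm_pos_iff.2 (hd z hzD hzw)
          rw [norm_div, div_le_iff₀ hpos]
          have := (hw' z hzD hzw).1
          rw [hzw, norm_mul] at this
          linarith
      _ = hfin'.toFinset.card * (C * ‖(w' - w) ^ (α + 1)‖) := by
          rw [Finset.sum_const, nsmul_eq_mul]
      _ ≤ N * (C * ‖(w' - w) ^ (α + 1)‖) := by gcongr
      _ = _ := by ring
  have hga : AnalyticAt ℂ g w := hg.analyticAt (isOpen_ball.mem_nhds hw)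
  have hord : ((α + 1 : ℕ) : ℕ∞) ≤ analyticOrderAt g w := by
    by_contra hlt
    have hlt := not_le.1 hlt
    obtain ⟨u, hu, hu0, hgu⟩ := hga.analyticOrderAt_ne_top.1 hlt.ne_top
    have hnlt : analyticOrderNatAt g w < α + 1 := by
      rw [← Nat.cast_analyticOrderNatAt hlt.ne_top] at hlt
      exact_mod_cast hlt
    obtain ⟨k, hk⟩ := Nat.exists_eq_add_of_lt hnlt
    -- dividing by `(w' - w) ^ n`, `n` the order of `g`, forces `u` to vanish at `w`
    have hub : ∀ᶠ w' in 𝓝[≠] w, ‖u w'‖ ≤ (N * C) * ‖(w' - w) ^ (k + 1)‖ := by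
      filter_upwards [hbound, hgu.filter_mono nhdsWithin_le_nhds, self_mem_nhdsWithin]
        with w' h1 h2 h3
      have hpos : 0 < ‖(w' - w) ^ analyticOrderNatAt g w‖ :=
        norm_pos_iff.2 (pow_ne_zero _ (sub_ne_zero.2 h3))
      rw [h2, hk, add_assoc, pow_add, norm_smul, norm_mul] at h1
      refine le_of_mul_le_mul_left ?_ hpos
      linarith
    have hlim : Tendsto (fun w' => (N * C) * ‖(w' - w) ^ (k + 1)‖) (𝓝[≠] w) (𝓝 0) := by
      have : Continuous fun w' : ℂ => (N * C) * ‖(w' - w) ^ (k + 1)‖ := by fun_prop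
      have := (this.tendsto w).mono_left (nhdsWithin_le_nhds (s := {w}ᶜ))
      simpa using this
    have hu0' := squeeze_zero_norm' hub hlim
    exact hu0 (tendsto_nhds_unique (hu.continuousAt.tendsto.mono_left nhdsWithin_le_nhds) hu0')
  exact (natCast_le_analyticOrderAt_iff_iteratedDeriv_eq_zero hga).1 hord α (Nat.lt_succ_self α)

/-- If `F` is analytic and not locally zero, every analytic `h` vanishing to order at least that of
`F` is `O(F)`. -/
lemma exists_order_isBigO {F : ℂ → ℂ} {ξ : ℂ} (hF : AnalyticAt ℂ F ξ)
    (hne : ¬ ∀ᶠ z in 𝓝 ξ, F z = 0) :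
    ∃ p : ℕ, ∀ h : ℂ → ℂ, AnalyticAt ℂ h ξ → (∀ i < p, iteratedDeriv i h ξ = 0) →
      h =O[𝓝 ξ] F := by
  obtain ⟨u, hu, hu0, hFu⟩ := hF.analyticOrderAt_ne_top.1 (by rwa [Ne, analyticOrderAt_eq_top])
  refine ⟨analyticOrderNatAt F ξ, fun h hh hi => ?_⟩
  obtain ⟨v, hv, hhv⟩ := (natCast_le_analyticOrderAt hh).1
    ((natCast_le_analyticOrderAt_iff_iteratedDeriv_eq_zero hh).2 hi)
  have huv : v =O[𝓝 ξ] u :=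
    (hv.continuousAt.tendsto.isBigO_one ℂ).trans
      ((Asymptotics.isBigO_const_left_iff_pos_le_norm one_ne_zero).2 ⟨‖u ξ‖ / 2, by positivity, by
        filter_upwards [hu.continuousAt.norm.eventually_const_lt
          (half_lt_self (norm_pos_iff.2 hu0))] with z hz using hz.le⟩)
  exact (((Asymptotics.isBigO_refl (fun z => (z - ξ) ^ analyticOrderNatAt F ξ) _).smul huv).congr'
    (EventuallyEq.symm hhv) hFu.symm)

/-! ### The functional as a combination of derivatives -/

theorem bell_functional (D : Set ℂ)
    (hDo : IsOpen D) (hDc : IsConnected D) (hDb : Bornology.IsBounded D)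
    (f : ℂ → ℂ) (hf : DifferentiableOn ℂ f D) (hmaps : Set.MapsTo f D (ball (0 : ℂ) 1))
    (hproper : ∀ C : Set ℂ, C ⊆ ball (0 : ℂ) 1 → IsCompact C → IsCompact (D ∩ f ⁻¹' C))
    (w : ℂ) (hw : w ∈ ball (0 : ℂ) 1) (α : ℕ) :
    ∃ s : ℕ, 0 < s ∧ ∃ c : ℂ → ℕ → ℂ,
      ∀ h : ℂ → ℂ, DifferentiableOn ℂ h D →
        IntegrableOn (fun z => ‖h z‖ ^ 2) D volume →
        ∀ g : ℂ → ℂ, DifferentiableOn ℂ g (ball (0 : ℂ) 1) →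
          (∀ w' ∈ ball (0 : ℂ) 1, (∀ z ∈ D, f z = w' → deriv f z ≠ 0) →
            g w' = ∑ᶠ z ∈ D ∩ f ⁻¹' {w'}, h z / deriv f z) →
          iteratedDeriv α g w =
            ∑ᶠ ξ ∈ D ∩ f ⁻¹' {w}, ∑ β ∈ Finset.range (s + 1), c ξ β * iteratedDeriv β h ξ := by
  have hfa : AnalyticOnNhd ℂ f D := hf.analyticOnNhd hDo
  have hne : ∀ z ∈ D, ¬ ∀ᶠ y in 𝓝 z, f y = f z := fun z hz =>
    not_eventually_const hDo hDc hf hmaps hproper hz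
  have hfin : ∀ w' ∈ ball (0 : ℂ) 1, (D ∩ f ⁻¹' {w'}).Finite := by
    intro w' hw'
    obtain ⟨N, hN⟩ := exists_fiber_encard_le
      (hproper {w'} (by simpa using hw') isCompact_singleton)
      (fun z hz => hfa z hz.1) (fun z hz => hne z hz.1)
    have := hN w'
    rw [inter_assoc, inter_self] at this
    exact finite_of_encard_le_coe this
  have hp : ∀ ξ ∈ D ∩ f ⁻¹' {w}, ∃ p : ℕ, ∀ h : ℂ → ℂ, AnalyticAt ℂ h ξ →
      (∀ i < p, iteratedDeriv i h ξ = 0) →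
      h =O[𝓝 ξ] fun z => deriv f z * (f z - w) ^ (α + 1) := by
    rintro ξ ⟨hξ, hξw : f ξ = w⟩
    have h1 : AnalyticAt ℂ (fun z => f z - w) ξ := (hfa ξ hξ).sub analyticAt_const
    refine exists_order_isBigO ((hfa ξ hξ).deriv.mul (h1.pow _)) fun h0 => hne ξ hξ ?_
    filter_upwards [h0, eventually_deriv_ne_zero (hfa ξ hξ) (hne ξ hξ)] with z hz hz'
    by_contra hzw
    exact mul_ne_zero (hz' hzw) (pow_ne_zero _ (sub_ne_zero.2 (hξw ▸ hzw))) hz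
  choose! p hp using hp
  obtain ⟨s₀, hs₀⟩ := ((hfin w hw).image p).bddAbove
  refine ⟨s₀ + 1, Nat.succ_pos _, ?_⟩
  set s := s₀ + 1 with hs
  set T := (hfin w hw).toFinset with hT
  have hTD : ∀ ξ ∈ T, ξ ∈ D ∩ f ⁻¹' {w} := fun ξ hξ => (hfin w hw).mem_toFinset.1 hξ
  set V := transformPairs D f hfin with hV
  have hcd : ∀ {h : ℂ → ℂ} {U : Set ℂ}, IsOpen U → DifferentiableOn ℂ h U →
      ∀ {z : ℂ}, z ∈ U → ∀ n : ℕ, ContDiffAt ℂ n h z := fun hU hh z hz n =>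
    (hh.analyticAt (hU.mem_nhds hz)).contDiffAt
  let G : V →ₗ[ℂ] ℂ :=
    { toFun := fun x => iteratedDeriv α x.1.2 w
      map_add' := fun x y => iteratedDeriv_add
        (hcd isOpen_ball x.2.2.1 hw α) (hcd isOpen_ball y.2.2.1 hw α)
      map_smul' := fun a x => iteratedDeriv_const_smul_field a _ }
  let L : T × Fin (s + 1) → V →ₗ[ℂ] ℂ := fun i =>
    { toFun := fun x => iteratedDeriv i.2 x.1.1 i.1
      map_add' := fun x y => iteratedDeriv_add
        (hcd hDo x.2.1 (hTD _ i.1.2).1 _) (hcd hDo y.2.1 (hTD _ i.1.2).1 _)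
      map_smul' := fun a x => iteratedDeriv_const_smul_field a _ }
  have hker : ⨅ i, LinearMap.ker (L i) ≤ LinearMap.ker G := by
    intro x hx
    have hx0 : ∀ i, L i x = 0 := by simpa [Submodule.mem_iInf] using hx
    obtain ⟨⟨h, g⟩, hh, hg, hgh⟩ := x
    refine iteratedDeriv_transform_eq_zero hDo hf hproper hne hw α (hfin w hw) hg
      (fun ξ hξ => ?_) hgh
    refine hp ξ hξ h (hh.analyticAt (hDo.mem_nhds hξ.1)) fun i hi => ?_
    have his : i < s + 1 := by
      have := hs₀ (mem_image_of_mem p hξ)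
      omega
    exact hx0 (⟨ξ, (hfin w hw).mem_toFinset.2 hξ⟩, ⟨i, his⟩)
  obtain ⟨c, hc⟩ := (Submodule.mem_span_range_iff_exists_fun ℂ).1 (mem_span_of_iInf_ker_le_ker hker)
  classical
  refine ⟨fun ξ β => if hi : ξ ∈ T ∧ β < s + 1 then c (⟨ξ, hi.1⟩, ⟨β, hi.2⟩) else 0,
    fun h hh _ g hg hgh => ?_⟩
  have hG := LinearMap.congr_fun hc (⟨(h, g), hh, hg, hgh⟩ : V)
  rw [finsum_mem_eq_finite_toFinset_sum _ (hfin w hw), ← hT]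
  refine (hG.symm : iteratedDeriv α g w = _).trans ?_
  rw [LinearMap.sum_apply, Fintype.sum_prod_type, ← Finset.sum_coe_sort T]
  refine Finset.sum_congr rfl fun ξ _ => ?_
  rw [Finset.sum_range]
  refine Finset.sum_congr rfl fun β _ => ?_
  have hmem : (ξ : ℂ) ∈ T ∧ (β : ℕ) < s + 1 := ⟨ξ.2, β.2⟩
  have hcoef : (if hi : (ξ : ℂ) ∈ T ∧ (β : ℕ) < s + 1 then c (⟨ξ, hi.1⟩, ⟨β, hi.2⟩) else 0)
      = c (ξ, β) := dif_pos hmem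
  exact congrArg (· * iteratedDeriv β h ξ) hcoef.symm
end
end

section
/- Let D ⊆ ℂ be a domain. The reduced Bergman space 𝒟(D) is closed in the Bergman space A²(D): if (u_n) is a sequence of holomorphic functions on D, each having a primitive on D and each square-integrable, u is holomorphic and square-integrable on D, and ∫_D |u_n − u|² dA → 0, then u has a primitive on D, i.e. there exists a holomorphic function g on D with g′ = u. -/
/-!
Mean-square convergence of holomorphic functions is locally uniform: integrating the mean value
property of `f ^ 2` over circles gives `π r² ‖f c‖² ≤ ∫ ‖f‖²` over the disc of radius `r`
about `c` (`sq_norm_le_integral_ball`). On a disc in `D` the limit `v` has a primitive `V`, and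
the mean value inequality applied to `g n - V`, where `g n` is a primitive of `u n`, shows that
`g n z - g n y → V z - V y` for `z`, `y` in the disc (`exists_local_primitive_tendsto`).

Normalise all `g n` to vanish at one point of `D`. The set of points at which `g n` converges is
then nonempty, open and relatively closed in `D`, hence all of `D`, and near every point the limit
differs from a local primitive of `v` by a constant, so it is a primitive of `v`.
-/

open MeasureTheory Complex Metric Filter

noncomputable section

/-- The area form of the mean value property, obtained from the circle form in polar coordinates. -/
lemma integral_ball_eq_of_holo {h : ℂ → ℂ} {c : ℂ} {r : ℝ} (hr : 0 < r)
    (hh : DifferentiableOn ℂ h (closedBall c r)) :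
    ∫ z in ball c r, h z = (Real.pi * r ^ 2 : ℝ) • h c := by
  have hmap : ∀ p : ℝ × ℝ, c + Complex.polarCoord.symm p = circleMap c p.1 p.2 := by
    intro p
    simp [circleMap, Complex.exp_mul_I]
  have hcirc : ∀ ρ ∈ Set.Ioo 0 r,
      ∫ θ in Set.Ioo (-Real.pi) Real.pi, h (circleMap c ρ θ) = (2 * Real.pi) • h c := by
    intro ρ hρ
    have h1 : DiffContOnCl ℂ h (ball c |ρ|) := by
      rw [abs_of_pos hρ.1]
      apply DifferentiableOn.diffContOnCl
      rw [closure_ball c hρ.1.ne']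
      exact hh.mono (closedBall_subset_closedBall hρ.2.le)
    have h2 := h1.circleAverage
    have hper : Function.Periodic (fun θ => h (circleMap c ρ θ)) (2 * Real.pi) :=
      (periodic_circleMap c ρ).comp h
    have h3 := hper.intervalIntegral_add_eq (-Real.pi) 0
    rw [← integral_Ioc_eq_integral_Ioo, ← intervalIntegral.integral_of_le (by linarith [Real.pi_pos])]
    rw [show -Real.pi + 2 * Real.pi = Real.pi by ring, zero_add] at h3
    rw [h3, ← h2, Real.circleAverage_def, smul_smul,
      mul_inv_cancel₀ (by positivity), one_smul]
  calc ∫ z in ball c r, h z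
      = ∫ w, (ball (0 : ℂ) r).indicator (fun w => h (c + w)) w := by
        rw [← integral_indicator measurableSet_ball,
          ← integral_add_left_eq_self _ c]
        congr 1
        ext w
        simp [Set.indicator]
    _ = ∫ p in polarCoord.target, p.1 •
          (ball (0 : ℂ) r).indicator (fun w => h (c + w)) (Complex.polarCoord.symm p) :=
        (Complex.integral_comp_polarCoord_symm _).symm
    _ = ∫ p in polarCoord.target, (Set.Ioo 0 r ×ˢ Set.Ioo (-Real.pi) Real.pi).indicator
          (fun p : ℝ × ℝ => p.1 • h (circleMap c p.1 p.2)) p := by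
        apply setIntegral_congr_fun polarCoord.open_target.measurableSet
        intro p hp
        have hp' : 0 < p.1 ∧ (-Real.pi < p.2 ∧ p.2 < Real.pi) := by
          simpa [polarCoord] using hp
        have e1 : Complex.polarCoord.symm p ∈ ball (0 : ℂ) r ↔
            p ∈ Set.Ioo 0 r ×ˢ Set.Ioo (-Real.pi) Real.pi := by
          rw [mem_ball_zero_iff, Complex.norm_polarCoord_symm, abs_of_pos hp'.1]
          simp [hp'.1, hp'.2.1, hp'.2.2]
        by_cases hq : Complex.polarCoord.symm p ∈ ball (0 : ℂ) r
        · simp only [Set.indicator_of_mem hq, Set.indicator_of_mem (e1.1 hq), hmap]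
        · simp only [Set.indicator_of_notMem hq, Set.indicator_of_notMem (fun h => hq (e1.2 h)),
            smul_zero]
    _ = ∫ p in Set.Ioo 0 r ×ˢ Set.Ioo (-Real.pi) Real.pi,
          (p : ℝ × ℝ).1 • h (circleMap c p.1 p.2) := by
        rw [setIntegral_indicator (measurableSet_Ioo.prod measurableSet_Ioo)]
        congr 2
        apply Set.inter_eq_right.2
        intro p hp
        exact ⟨hp.1.1, hp.2⟩
    _ = ∫ ρ in Set.Ioo 0 r, ∫ θ in Set.Ioo (-Real.pi) Real.pi, ρ • h (circleMap c ρ θ) := by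
        rw [Measure.volume_eq_prod, setIntegral_prod]
        apply IntegrableOn.mono_set (t := Set.Icc 0 r ×ˢ Set.Icc (-Real.pi) Real.pi) _
          (Set.prod_mono Set.Ioo_subset_Icc_self Set.Ioo_subset_Icc_self)
        apply ContinuousOn.integrableOn_compact (isCompact_Icc.prod isCompact_Icc)
        apply continuous_fst.continuousOn.smul
        apply hh.continuousOn.comp (by simp only [circleMap]; fun_prop)
        intro p hp
        simp [circleMap, dist_eq_norm, abs_of_nonneg hp.1.1, hp.1.2]
    _ = ∫ ρ in Set.Ioo 0 r, ρ • ((2 * Real.pi) • h c) := by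
        apply setIntegral_congr_fun measurableSet_Ioo
        intro ρ hρ
        simp only [integral_smul, hcirc ρ hρ]
    _ = (Real.pi * r ^ 2 : ℝ) • h c := by
        rw [integral_smul_const, ← integral_Ioc_eq_integral_Ioo,
          ← intervalIntegral.integral_of_le hr.le, integral_id, smul_smul]
        congr 1
        ring

lemma sq_norm_le_integral_ball {f : ℂ → ℂ} {c : ℂ} {r : ℝ} (hr : 0 < r)
    (hf : DifferentiableOn ℂ f (closedBall c r)) :
    Real.pi * r ^ 2 * ‖f c‖ ^ 2 ≤ ∫ z in ball c r, ‖f z‖ ^ 2 := by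
  have h := integral_ball_eq_of_holo hr (hf.pow 2)
  have h2 := norm_integral_le_integral_norm (μ := volume.restrict (ball c r)) (fun z => f z ^ 2)
  simp only [Pi.pow_apply] at h
  rw [h, norm_smul, Real.norm_of_nonneg (by positivity)] at h2
  simpa [norm_pow] using h2

lemma integrableOn_sq_norm_sub {D : Set ℂ} (hDo : IsOpen D) {f g : ℂ → ℂ}
    (hf : DifferentiableOn ℂ f D) (hg : DifferentiableOn ℂ g D)
    (hfi : IntegrableOn (fun z => ‖f z‖ ^ 2) D volume)
    (hgi : IntegrableOn (fun z => ‖g z‖ ^ 2) D volume) :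
    IntegrableOn (fun z => ‖f z - g z‖ ^ 2) D volume := by
  have hf' := hf.continuousOn.aestronglyMeasurable (μ := volume) hDo.measurableSet
  have hg' := hg.continuousOn.aestronglyMeasurable (μ := volume) hDo.measurableSet
  exact (((memLp_two_iff_integrable_sq_norm hf').2 hfi).sub
    ((memLp_two_iff_integrable_sq_norm hg').2 hgi)).integrable_norm_pow two_ne_zero

/-- Near each point of `D` the increments of the primitives `g n` converge to the increments of a
local primitive of `v`. -/
lemma exists_local_primitive_tendsto {D : Set ℂ} (hDo : IsOpen D)
    {u : ℕ → ℂ → ℂ} (hu_holo : ∀ n, DifferentiableOn ℂ (u n) D)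
    (hu_int : ∀ n, IntegrableOn (fun z => ‖u n z‖ ^ 2) D volume)
    {v : ℂ → ℂ} (hv_holo : DifferentiableOn ℂ v D)
    (hv_int : IntegrableOn (fun z => ‖v z‖ ^ 2) D volume)
    (hlim : Tendsto (fun n => ∫ z in D, ‖u n z - v z‖ ^ 2) atTop (nhds 0))
    {g : ℕ → ℂ → ℂ} (hg : ∀ n, ∀ z ∈ D, HasDerivAt (g n) (u n z) z)
    {x : ℂ} (hx : x ∈ D) :
    ∃ r > 0, ball x r ⊆ D ∧ ∃ V : ℂ → ℂ, (∀ z ∈ ball x r, HasDerivAt V (v z) z) ∧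
      ∀ y ∈ ball x r, ∀ z ∈ ball x r,
        Tendsto (fun n => g n z - g n y) atTop (nhds (V z - V y)) := by
  obtain ⟨R, hR, hRD⟩ := nhds_basis_closedBall.mem_iff.1 (hDo.mem_nhds hx)
  set r := R / 2 with hr
  have hr0 : 0 < r := by positivity
  have hxD : ball x r ⊆ D :=
    (ball_subset_closedBall.trans (closedBall_subset_closedBall (by linarith))).trans hRD
  obtain ⟨V, hV⟩ := (hv_holo.mono hxD).isExactOn_ball
  refine ⟨r, hr0, hxD, V, hV, fun y hy z hz => ?_⟩
  set a : ℕ → ℝ := fun n => ∫ z in D, ‖u n z - v z‖ ^ 2 with ha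
  have hbound : ∀ n, ∀ w ∈ ball x r, ‖u n w - v w‖ ≤ √(a n / (Real.pi * r ^ 2)) := by
    intro n w hw
    have hwD : closedBall w r ⊆ D := by
      refine (closedBall_subset_closedBall' ?_).trans hRD
      have := mem_ball.1 hw
      linarith
    have h1 := sq_norm_le_integral_ball (f := fun z => u n z - v z) hr0
      (((hu_holo n).sub hv_holo).mono hwD)
    have h2 : ∫ z in ball w r, ‖u n z - v z‖ ^ 2 ≤ a n :=
      setIntegral_mono_set
        (integrableOn_sq_norm_sub hDo (hu_holo n) hv_holo (hu_int n) hv_int)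
        (Eventually.of_forall fun z => by positivity)
        (ball_subset_closedBall.trans hwD).eventuallyLE
    apply Real.le_sqrt_of_sq_le
    rw [le_div_iff₀ (by positivity), mul_comm]
    exact h1.trans h2
  have hmv : ∀ n, ‖(g n z - g n y) - (V z - V y)‖ ≤
      √(a n / (Real.pi * r ^ 2)) * ‖z - y‖ := by
    intro n
    have := (convex_ball x r).norm_image_sub_le_of_norm_hasDerivWithin_le
      (f := fun w => g n w - V w) (f' := fun w => u n w - v w)
      (fun w hw => ((hg n w (hxD hw)).sub (hV w hw)).hasDerivWithinAt)
      (hbound n) hy hz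
    rwa [sub_sub_sub_comm]
  rw [tendsto_iff_norm_sub_tendsto_zero]
  refine squeeze_zero (fun n => norm_nonneg _) hmv ?_
  have h1 : Tendsto (fun n => √(a n / (Real.pi * r ^ 2)) * ‖z - y‖) atTop
      (nhds (√(0 / (Real.pi * r ^ 2)) * ‖z - y‖)) :=
    ((hlim.div_const _).sqrt).mul_const _
  simpa using h1

/-- The reduced Bergman space is closed in the Bergman space: an `L²`-limit of
square-integrable holomorphic functions with primitives, which is itself holomorphic
and square-integrable, has a primitive. -/
theorem reducedBergman_closed (D : Set ℂ)
    (hDo : IsOpen D) (hDc : IsConnected D)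
    (u : ℕ → ℂ → ℂ)
    (hu_holo : ∀ n, DifferentiableOn ℂ (u n) D)
    (hu_prim : ∀ n, HasPrimitiveOn (u n) D)
    (hu_int : ∀ n, IntegrableOn (fun z => ‖u n z‖ ^ 2) D volume)
    (v : ℂ → ℂ) (hv_holo : DifferentiableOn ℂ v D)
    (hv_int : IntegrableOn (fun z => ‖v z‖ ^ 2) D volume)
    (hlim : Tendsto (fun n => ∫ z in D, ‖u n z - v z‖ ^ 2) atTop (nhds 0)) :
    HasPrimitiveOn v D := by
  choose G _ hG using hu_prim
  obtain ⟨x₀, hx₀⟩ := hDc.nonempty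
  set g : ℕ → ℂ → ℂ := fun n z => G n z - G n x₀ with hgdef
  have hg : ∀ n, ∀ z ∈ D, HasDerivAt (g n) (u n z) z :=
    fun n z hz => (hG n z hz).sub_const _
  have key := fun x (hx : x ∈ D) =>
    exists_local_primitive_tendsto hDo hu_holo hu_int hv_holo hv_int hlim hg hx
  set U : Set ℂ := {z | z ∈ D ∧ ∃ l, Tendsto (fun n => g n z) atTop (nhds l)} with hU
  -- Convergence at one point of a disc spreads to the whole disc.
  have spread : ∀ {y z l L : ℂ}, Tendsto (fun n => g n y) atTop (nhds l) →
      Tendsto (fun n => g n z - g n y) atTop (nhds L) →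
      Tendsto (fun n => g n z) atTop (nhds (L + l)) := by
    intro y z l L h1 h2
    simpa using h2.add h1
  have hUo : IsOpen U := by
    rw [Metric.isOpen_iff]
    rintro y ⟨hyD, l, hl⟩
    obtain ⟨r, hr, hrD, V, -, hT⟩ := key y hyD
    exact ⟨r, hr, fun z hz => ⟨hrD hz, _, spread hl (hT y (mem_ball_self hr) z hz)⟩⟩
  have hUD : D ⊆ U := by
    refine hDc.isPreconnected.subset_of_closure_inter_subset hUo
      ⟨x₀, hx₀, hx₀, 0, by simp [hgdef]⟩ ?_
    rintro z ⟨hzc, hzD⟩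
    obtain ⟨r, hr, hrD, V, -, hT⟩ := key z hzD
    obtain ⟨y, ⟨-, l, hl⟩, hy⟩ := mem_closure_iff.1 hzc r hr
    exact ⟨hzD, _, spread hl (hT y (by rwa [mem_ball, dist_comm]) z (mem_ball_self hr))⟩
  choose! g' hg' using fun z (hz : z ∈ D) => (hUD hz).2
  have hder : ∀ z ∈ D, HasDerivAt g' (v z) z := by
    intro x hx
    obtain ⟨r, hr, hrD, V, hV, hT⟩ := key x hx
    have heq : ∀ z ∈ ball x r, g' z = (V z - V x) + g' x := fun z hz =>
      tendsto_nhds_unique (hg' z (hrD hz)) (spread (hg' x hx) (hT x (mem_ball_self hr) z hz))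
    exact (((hV x (mem_ball_self hr)).sub_const _).add_const _).congr_of_eventuallyEq
      (eventually_of_mem (ball_mem_nhds x hr) heq)
  exact ⟨g', fun z hz => (hder z hz).differentiableAt.differentiableWithinAt, hder⟩
end
end

section
/- Let D be a bounded domain in ℂ and ζ ∈ D. Then there exists a function K ∈ 𝒟(D) (holomorphic and square-integrable on D, with a primitive on D) such that u(ζ) = ∫_D u(z)·conj(K(z)) dA(z) for every u ∈ 𝒟(D); i.e. the reduced Bergman space is a reproducing kernel Hilbert space and the reduced Bergman kernel K̃_D(·, ζ) = K exists. -/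
/-!
The elements of the reduced Bergman space are viewed as classes in `L²(D)`, where they form a
subspace; the kernel is the Riesz representative of evaluation at `ζ` on that subspace. Two facts
make this work.

* Evaluation is bounded. By the mean value property on circles, integrated in polar coordinates
  and applied to `u ^ 2`, the value `‖u z‖ ^ 2` times the area of a disc `ball z r ⊆ D` is at most
  `∫_D ‖u‖ ^ 2` (`exists_pointwise_bound`). In particular, evaluation is well defined on classes.
* The subspace is closed, hence complete (`isClosed_reducedBergmanSubmodule`). The pointwise bound
  holds with the same constant near each point, so an `L²`-convergent sequence converges locally
  uniformly, and the limit is holomorphic. The primitives, normalised to vanish at a base point,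
  converge pointwise because `D` is connected, and their limit is a primitive of the limit
  (`HasPrimitiveOn.of_tendstoLocallyUniformlyOn`).
-/

open MeasureTheory Complex Metric

noncomputable section

/-- `u` belongs to the reduced Bergman space of `D`. -/
def MemReducedBergman (D : Set ℂ) (u : ℂ → ℂ) : Prop :=
  DifferentiableOn ℂ u D ∧ HasPrimitiveOn u D ∧
    IntegrableOn (fun z => ‖u z‖ ^ 2) D volume

open Filter Topology
open scoped ENNReal

/-! ### Pointwise bounds by the `L²` norm -/

/-- The sub-mean value inequality for `‖w‖` on a circle. The angle runs over `(-π, π)`, the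
range used by `Complex.polarCoord`. -/
lemma enorm_center_le_lintegral_circle {w : ℂ → ℂ} {c : ℂ} {r ρ : ℝ}
    (hw : DifferentiableOn ℂ w (ball c r)) (hρ : 0 < ρ) (hρr : ρ < r) :
    ∫⁻ _ in Set.Ioo (-Real.pi) Real.pi, ‖w c‖ₑ ≤
      ∫⁻ θ in Set.Ioo (-Real.pi) Real.pi, ‖w (circleMap c ρ θ)‖ₑ := by
  have hd : DiffContOnCl ℂ w (ball c |ρ|) := by
    rw [abs_of_pos hρ]
    exact (hw.mono (closedBall_subset_ball hρr)).diffContOnCl_ball subset_rfl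
  have hmean := hd.circleAverage
  have hper : Function.Periodic (fun θ => w (circleMap c ρ θ)) (2 * Real.pi) := fun θ => by
    simp only [periodic_circleMap c ρ θ]
  have hshift := hper.intervalIntegral_add_eq 0 (-Real.pi)
  rw [zero_add, show -Real.pi + 2 * Real.pi = Real.pi by ring] at hshift
  rw [Real.circleAverage_def, hshift, intervalIntegral.integral_of_le (by linarith [Real.pi_pos]),
    integral_Ioc_eq_integral_Ioo] at hmean
  have hI : ∫ θ in Set.Ioo (-Real.pi) Real.pi, w (circleMap c ρ θ) = (2 * Real.pi) • w c := by
    rw [← hmean, smul_smul, mul_inv_cancel₀ (by positivity), one_smul]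
  calc ∫⁻ _ in Set.Ioo (-Real.pi) Real.pi, ‖w c‖ₑ
      = ‖(2 * Real.pi) • w c‖ₑ := by
        rw [setLIntegral_const, Real.volume_Ioo, enorm_smul,
          Real.enorm_of_nonneg (by positivity), mul_comm]
        congr 2; ring
    _ ≤ _ := by
        rw [← hI]; exact enorm_integral_le_lintegral_enorm _

/-- The area sub-mean value inequality for `‖w‖`: integrate the inequality on circles in polar
coordinates. Writing the left-hand side as the integral of a constant in polar coordinates
too makes it unnecessary to evaluate the area of the disc. -/
lemma lintegral_ball_center_le {w : ℂ → ℂ} {c : ℂ} {r : ℝ}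
    (hw : DifferentiableOn ℂ w (ball c r)) :
    ∫⁻ _ in ball c r, ‖w c‖ₑ ≤ ∫⁻ z in ball c r, ‖w z‖ₑ := by
  -- Integration over the disc in polar coordinates centred at `c`.
  have key : ∀ F : ℂ → ℝ≥0∞, Measurable ((ball c r).indicator F) →
      ∫⁻ z in ball c r, F z = ∫⁻ ρ in Set.Ioi (0 : ℝ), ∫⁻ θ in Set.Ioo (-Real.pi) Real.pi,
        ENNReal.ofReal ρ * (ball c r).indicator F (circleMap c ρ θ) := by
    intro F hF
    have hpt : ∀ p : ℝ × ℝ, c + Complex.polarCoord.symm p = circleMap c p.1 p.2 := by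
      intro p
      rw [Complex.polarCoord_symm_apply, circleMap, Complex.exp_mul_I]
      push_cast; rfl
    rw [← lintegral_indicator measurableSet_ball, ← lintegral_add_left_eq_self _ c,
      ← Complex.lintegral_comp_polarCoord_symm]
    simp only [hpt, smul_eq_mul]
    rw [polarCoord_target, Measure.volume_eq_prod, setLIntegral_prod]
    refine Measurable.aemeasurable ?_
    refine (ENNReal.measurable_ofReal.comp measurable_fst).mul (hF.comp ?_)
    unfold circleMap
    fun_prop
  have hm : Measurable ((ball c r).indicator fun z => ‖w z‖ₑ) := by
    classical
    rw [← Set.piecewise_eq_indicator]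
    exact hw.continuousOn.enorm.measurable_piecewise continuousOn_const measurableSet_ball
  rw [key _ (measurable_const.indicator measurableSet_ball), key _ hm]
  refine setLIntegral_mono_ae' measurableSet_Ioi (Eventually.of_forall fun ρ hρ => ?_)
  have hρ0 : (0 : ℝ) < ρ := hρ
  rw [lintegral_const_mul' _ _ ENNReal.ofReal_ne_top, lintegral_const_mul' _ _ ENNReal.ofReal_ne_top]
  gcongr 1
  by_cases hρr : ρ < r
  · have hmem : ∀ θ, circleMap c ρ θ ∈ ball c r := fun θ => by
      simpa [mem_ball, dist_eq_norm, circleMap, abs_of_pos hρ0] using hρr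
    simp only [Set.indicator_of_mem (hmem _)]
    exact enorm_center_le_lintegral_circle hw hρ0 hρr
  · have hmem : ∀ θ, circleMap c ρ θ ∉ ball c r := fun θ => by
      simpa [mem_ball, dist_eq_norm, circleMap, abs_of_pos hρ0] using hρr
    simp only [Set.indicator_of_notMem (hmem _)]
    exact le_rfl

/-- Holomorphic `L²` functions are bounded pointwise by their `L²` norm. The constant depends only
on the radius `r`, so the bound is uniform over the points at distance at least `r` from the
complement of `D`; this is what gives locally uniform convergence. -/
lemma exists_pointwise_bound {r : ℝ} (hr : 0 < r) (D : Set ℂ) : ∃ C : ℝ, 0 ≤ C ∧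
    ∀ z : ℂ, ball z r ⊆ D → ∀ u : ℂ → ℂ, DifferentiableOn ℂ u D →
      MemLp u 2 (volume.restrict D) →
      ‖u z‖ ≤ C * (eLpNorm u 2 (volume.restrict D)).toReal := by
  set A : ℝ≥0∞ := volume (ball (0 : ℂ) r) with hA
  have hA0 : A ≠ 0 := (measure_ball_pos _ _ hr).ne'
  have hAt : A ≠ ∞ := measure_ball_lt_top.ne
  have hAr : 0 < A.toReal := ENNReal.toReal_pos hA0 hAt
  refine ⟨(√A.toReal)⁻¹, by positivity, fun z hz u hu hL => ?_⟩
  have h1 := lintegral_ball_center_le (w := fun x => u x ^ 2) ((hu.mono hz).pow 2)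
  have h2 : ∫⁻ x, ‖u x‖ₑ ^ 2 ∂(volume.restrict D) = eLpNorm u 2 (volume.restrict D) ^ 2 := by
    have := eLpNorm_nnreal_pow_eq_lintegral (f := u) (μ := volume.restrict D) (p := 2) two_ne_zero
    simpa using this.symm
  have h3 : ‖u z‖ₑ ^ 2 * A ≤ eLpNorm u 2 (volume.restrict D) ^ 2 := by
    rw [← h2, hA, ← Measure.addHaar_ball_center volume z r]
    simp only [enorm_pow, setLIntegral_const] at h1
    exact h1.trans (lintegral_mono_set hz)
  have h4 := ENNReal.toReal_mono (ENNReal.pow_ne_top hL.eLpNorm_ne_top) h3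
  simp only [ENNReal.toReal_mul, ENNReal.toReal_pow, toReal_enorm] at h4
  rw [inv_mul_eq_div, le_div_iff₀ (Real.sqrt_pos.2 hAr)]
  refine le_of_sq_le_sq ?_ ENNReal.toReal_nonneg
  rw [mul_pow, Real.sq_sqrt hAr.le]
  exact h4

/-! ### Linear structure -/

lemma DifferentiableOn.aestronglyMeasurable_restrict {D : Set ℂ} (hDo : IsOpen D) {u : ℂ → ℂ}
    (hu : DifferentiableOn ℂ u D) : AEStronglyMeasurable u (volume.restrict D) :=
  hu.continuousOn.aestronglyMeasurable hDo.measurableSet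

/-- Square integrability in the form of membership in `L²`. -/
lemma memReducedBergman_iff {D : Set ℂ} (hDo : IsOpen D) {u : ℂ → ℂ} :
    MemReducedBergman D u ↔
      DifferentiableOn ℂ u D ∧ HasPrimitiveOn u D ∧ MemLp u 2 (volume.restrict D) := by
  refine and_congr_right fun hu => and_congr_right fun _ => ?_
  exact (memLp_two_iff_integrable_sq_norm (hu.aestronglyMeasurable_restrict hDo)).symm

lemma MemReducedBergman.memLp {D : Set ℂ} (hDo : IsOpen D) {u : ℂ → ℂ}
    (hu : MemReducedBergman D u) : MemLp u 2 (volume.restrict D) :=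
  ((memReducedBergman_iff hDo).1 hu).2.2

lemma MemReducedBergman.zero (D : Set ℂ) : MemReducedBergman D 0 :=
  ⟨differentiableOn_const 0, ⟨0, differentiableOn_const 0, fun z _ => hasDerivAt_const z 0⟩,
    by simp [IntegrableOn]⟩

lemma MemReducedBergman.add {D : Set ℂ} (hDo : IsOpen D) {u v : ℂ → ℂ}
    (hu : MemReducedBergman D u) (hv : MemReducedBergman D v) : MemReducedBergman D (u + v) := by
  obtain ⟨g, hg, hg'⟩ := hu.2.1
  obtain ⟨h, hh, hh'⟩ := hv.2.1
  exact (memReducedBergman_iff hDo).2 ⟨hu.1.add hv.1,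
    ⟨g + h, hg.add hh, fun z hz => (hg' z hz).add (hh' z hz)⟩, (hu.memLp hDo).add (hv.memLp hDo)⟩

lemma MemReducedBergman.const_smul {D : Set ℂ} (hDo : IsOpen D) {u : ℂ → ℂ} (a : ℂ)
    (hu : MemReducedBergman D u) : MemReducedBergman D (a • u) := by
  obtain ⟨g, hg, hg'⟩ := hu.2.1
  exact (memReducedBergman_iff hDo).2 ⟨hu.1.const_smul a,
    ⟨a • g, hg.const_smul a, fun z hz => (hg' z hz).const_smul a⟩, (hu.memLp hDo).const_smul a⟩

/-! ### Limits of functions with primitives -/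

/-- If the derivatives converge locally uniformly on a connected open set and the functions
converge at one point, then they converge at every point: the set of points of convergence is
open and relatively closed. -/
lemma exists_tendsto_of_deriv_tendstoLocallyUniformlyOn {D : Set ℂ} (hDo : IsOpen D)
    (hDc : IsPreconnected D) {g u : ℕ → ℂ → ℂ} {U : ℂ → ℂ}
    (hU : TendstoLocallyUniformlyOn u U atTop D)
    (hg : ∀ n, ∀ z ∈ D, HasDerivAt (g n) (u n z) z) {z₀ : ℂ} (hz₀ : z₀ ∈ D)
    (h₀ : CauchySeq fun n => g n z₀) {z : ℂ} (hz : z ∈ D) : CauchySeq fun n => g n z := by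
  -- Around each point of `D` there is a disc on which convergence propagates.
  have hball : ∀ x ∈ D, ∃ r > 0, ∀ y ∈ ball x r, ∀ y' ∈ ball x r,
      CauchySeq (fun n => g n y) → CauchySeq fun n => g n y' := by
    intro x hx
    obtain ⟨R, hR, hRD⟩ := Metric.nhds_basis_closedBall.mem_iff.1 (hDo.mem_nhds hx)
    have hunif : TendstoUniformlyOn u U atTop (closedBall x R) :=
      (tendstoLocallyUniformlyOn_iff_forall_isCompact hDo).1 hU _ hRD (isCompact_closedBall x R)
    refine ⟨R / 3, by positivity, fun y hy y' hy' hc => ?_⟩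
    -- A disc centred at `y`, inside the large disc, that contains `y'`.
    have hsub : ball y (2 * R / 3) ⊆ closedBall x R :=
      (ball_subset_ball' (by rw [mem_ball] at hy; linarith)).trans ball_subset_closedBall
    have hy'y : y' ∈ ball y (2 * R / 3) := by
      rw [mem_ball] at *
      linarith [dist_triangle_right y' y x]
    exact (uniformCauchySeqOn_ball_of_deriv (hunif.uniformCauchySeqOn.mono hsub)
      (fun n w hw => hg n w (hRD (hsub hw))) hc).cauchySeq hy'y
  let t : Set ℂ := {y | y ∈ D ∧ CauchySeq fun n => g n y}
  suffices H : D ⊆ t from (H hz).2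
  refine hDc.subset_of_closure_inter_subset ?_ ⟨z₀, hz₀, hz₀, h₀⟩ ?_
  · rw [isOpen_iff_mem_nhds]
    rintro x ⟨hx, hxc⟩
    obtain ⟨r, hr, h⟩ := hball x hx
    filter_upwards [ball_mem_nhds x hr, hDo.mem_nhds hx] with y hy hyD
    exact ⟨hyD, h x (mem_ball_self hr) y hy hxc⟩
  · rintro x ⟨hxt, hx⟩
    obtain ⟨r, hr, h⟩ := hball x hx
    obtain ⟨y, hyt, hy⟩ := Metric.mem_closure_iff.1 hxt r hr
    exact ⟨hx, h y (by rwa [mem_ball']) x (mem_ball_self hr) hyt.2⟩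

/-- A locally uniform limit of functions with primitives has a primitive, on a connected open
set. -/
lemma HasPrimitiveOn.of_tendstoLocallyUniformlyOn {D : Set ℂ} (hDo : IsOpen D)
    (hDc : IsConnected D) {u : ℕ → ℂ → ℂ} {U : ℂ → ℂ}
    (hU : TendstoLocallyUniformlyOn u U atTop D) (hu : ∀ n, HasPrimitiveOn (u n) D) :
    HasPrimitiveOn U D := by
  obtain ⟨z₀, hz₀⟩ := hDc.nonempty
  choose g _ hg using hu
  -- Normalise the primitives to vanish at `z₀`.
  let G : ℕ → ℂ → ℂ := fun n z => g n z - g n z₀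
  have hG : ∀ n, ∀ z ∈ D, HasDerivAt (G n) (u n z) z := fun n z hz => (hg n z hz).sub_const _
  have hc : ∀ z, z ∈ D → ∃ l, Tendsto (fun n => G n z) atTop (𝓝 l) := fun z hz =>
    cauchySeq_tendsto_of_complete <|
      exists_tendsto_of_deriv_tendstoLocallyUniformlyOn hDo hDc.isPreconnected hU hG hz₀
        (by simpa [G] using (cauchySeq_const (0 : ℂ))) hz
  choose! l hl using hc
  have hd : ∀ z ∈ D, HasDerivAt l (U z) z := fun z hz =>
    hasDerivAt_of_tendstoLocallyUniformlyOn hDo hU (Eventually.of_forall hG) hl hz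
  exact ⟨l, fun z hz => (hd z hz).differentiableAt.differentiableWithinAt, hd⟩

/-! ### Completeness -/

/-- The reduced Bergman space is sequentially closed in `L²(D)`. -/
lemma exists_memReducedBergman_of_tendsto {D : Set ℂ} (hDo : IsOpen D) (hDc : IsConnected D)
    {u : ℕ → ℂ → ℂ} (hu : ∀ n, MemReducedBergman D (u n)) {L : ℕ → Lp ℂ 2 (volume.restrict D)}
    (huL : ∀ n, L n =ᵐ[volume.restrict D] u n) {f : Lp ℂ 2 (volume.restrict D)}
    (hL : Tendsto L atTop (𝓝 f)) :
    ∃ U, MemReducedBergman D U ∧ f =ᵐ[volume.restrict D] U := by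
  have hdist : ∀ m n, (eLpNorm (u m - u n) 2 (volume.restrict D)).toReal = dist (L m) (L n) := by
    intro m n
    rw [dist_eq_norm, Lp.norm_def]
    refine congrArg _ (eLpNorm_congr_ae ?_)
    filter_upwards [Lp.coeFn_sub (L m) (L n), huL m, huL n] with x h1 h2 h3
    rw [h1, Pi.sub_apply, Pi.sub_apply, h2, h3]
  have hcau := Metric.cauchySeq_iff.1 hL.cauchySeq
  -- Pointwise bounds turn `L²` convergence into uniform convergence near each point.
  have hloc : ∀ x ∈ D, ∃ r > 0, ball x r ⊆ D ∧ UniformCauchySeqOn u atTop (ball x r) := by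
    intro x hx
    obtain ⟨r, hr, hxr⟩ := Metric.isOpen_iff.1 hDo x hx
    obtain ⟨C, hC, hb⟩ := exists_pointwise_bound (half_pos hr) D
    refine ⟨r / 2, half_pos hr, (ball_subset_ball (by linarith)).trans hxr, ?_⟩
    rw [Metric.uniformCauchySeqOn_iff]
    intro ε hε
    obtain ⟨N, hN⟩ := hcau (ε / (C + 1)) (by positivity)
    refine ⟨N, fun m hm n hn y hy => ?_⟩
    have hyD : ball y (r / 2) ⊆ D :=
      (ball_subset_ball' (by rw [mem_ball] at hy; linarith)).trans hxr
    have h1 := hb y hyD (u m - u n) ((hu m).1.sub (hu n).1)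
      (((hu m).memLp hDo).sub ((hu n).memLp hDo))
    rw [hdist, Pi.sub_apply, ← dist_eq_norm] at h1
    have h2 := hN m hm n hn
    rw [lt_div_iff₀ (by positivity)] at h2
    nlinarith [dist_nonneg (x := L m) (y := L n)]
  have hptw : ∀ x, x ∈ D → ∃ l, Tendsto (fun n => u n x) atTop (𝓝 l) := fun x hx => by
    obtain ⟨r, hr, -, h⟩ := hloc x hx
    exact cauchySeq_tendsto_of_complete (h.cauchySeq (mem_ball_self hr))
  choose! U hU using hptw
  have hlim : TendstoLocallyUniformlyOn u U atTop D := by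
    refine tendstoLocallyUniformlyOn_of_forall_exists_nhds fun x hx => ?_
    obtain ⟨r, hr, hrD, h⟩ := hloc x hx
    exact ⟨ball x r, mem_nhdsWithin_of_mem_nhds (ball_mem_nhds x hr),
      h.tendstoUniformlyOn_of_tendsto fun y hy => hU y (hrD hy)⟩
  have hfU : f =ᵐ[volume.restrict D] U := by
    obtain ⟨ns, hns, hae⟩ := (tendstoInMeasure_of_tendsto_Lp hL).exists_seq_tendsto_ae
    filter_upwards [hae, ae_all_iff.2 huL, ae_restrict_mem hDo.measurableSet] with x h1 h2 h3
    simp only [h2] at h1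
    exact tendsto_nhds_unique h1 ((hU x h3).comp hns.tendsto_atTop)
  refine ⟨U, (memReducedBergman_iff hDo).2 ⟨?_, ?_, ?_⟩, hfU⟩
  · exact hlim.differentiableOn (Eventually.of_forall fun n => (hu n).1) hDo
  · exact HasPrimitiveOn.of_tendstoLocallyUniformlyOn hDo hDc hlim fun n => (hu n).2.1
  · exact (memLp_congr_ae hfU).1 (Lp.memLp f)

/-- The reduced Bergman space as a subspace of `L²(D)`: the classes that have a representative
which is holomorphic on `D` with a primitive. -/
def reducedBergmanSubmodule (D : Set ℂ) (hDo : IsOpen D) :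
    Submodule ℂ (Lp ℂ 2 (volume.restrict D)) where
  carrier := {f | ∃ u, MemReducedBergman D u ∧ f =ᵐ[volume.restrict D] u}
  zero_mem' := ⟨0, .zero D, Lp.coeFn_zero _ _ _⟩
  add_mem' := by
    rintro f g ⟨u, hu, hfu⟩ ⟨v, hv, hgv⟩
    exact ⟨u + v, hu.add hDo hv, (Lp.coeFn_add f g).trans (hfu.add hgv)⟩
  smul_mem' := by
    rintro a f ⟨u, hu, hfu⟩
    exact ⟨a • u, hu.const_smul hDo a, (Lp.coeFn_smul a f).trans (hfu.const_smul a)⟩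

lemma isClosed_reducedBergmanSubmodule {D : Set ℂ} (hDo : IsOpen D) (hDc : IsConnected D) :
    IsClosed (reducedBergmanSubmodule D hDo : Set (Lp ℂ 2 (volume.restrict D))) := by
  refine isClosed_of_closure_subset fun f hf => ?_
  obtain ⟨L, hLmem, hL⟩ := mem_closure_iff_seq_limit.1 hf
  choose u hu huL using hLmem
  exact exists_memReducedBergman_of_tendsto hDo hDc hu huL hL

/-! ### Evaluation and the kernel -/

/-- Evaluation at a point of `D` is bounded for the `L²` norm. -/
lemma exists_eval_bound {D : Set ℂ} (hDo : IsOpen D) {ζ : ℂ} (hζ : ζ ∈ D) : ∃ C : ℝ,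
    ∀ u, MemReducedBergman D u → ∀ f : Lp ℂ 2 (volume.restrict D),
      f =ᵐ[volume.restrict D] u → ‖u ζ‖ ≤ C * ‖f‖ := by
  obtain ⟨r, hr, hrD⟩ := Metric.isOpen_iff.1 hDo ζ hζ
  obtain ⟨C, -, hb⟩ := exists_pointwise_bound hr D
  refine ⟨C, fun u hu f hfu => ?_⟩
  rw [Lp.norm_def, eLpNorm_congr_ae hfu]
  exact hb ζ hrD u hu.1 (hu.memLp hDo)

/-- Evaluation at a point of `D` depends only on the `L²` class: apply the bound to `u - v`, which
represents the zero class. -/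
lemma eval_eq_of_ae_eq {D : Set ℂ} (hDo : IsOpen D) {ζ : ℂ} (hζ : ζ ∈ D) {u v : ℂ → ℂ}
    (hu : MemReducedBergman D u) (hv : MemReducedBergman D v)
    (huv : u =ᵐ[volume.restrict D] v) : u ζ = v ζ := by
  obtain ⟨C, hC⟩ := exists_eval_bound hDo hζ
  have h := hC (u + (-1 : ℂ) • v) (hu.add hDo (hv.const_smul hDo _)) 0 (by
    filter_upwards [Lp.coeFn_zero ℂ 2 (volume.restrict D), huv] with x h1 h2
    rw [h1]
    simp [h2])
  simpa [← sub_eq_add_neg, sub_eq_zero] using h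

/-- Existence of the reduced Bergman kernel of a bounded planar domain: for every
`ζ ∈ D` there is an element `K` of the reduced Bergman space reproducing the value at
`ζ` of every element of the reduced Bergman space. -/
theorem reducedBergmanKernel_exists (D : Set ℂ)
    (hDo : IsOpen D) (hDc : IsConnected D) (hDb : Bornology.IsBounded D)
    (ζ : ℂ) (hζ : ζ ∈ D) :
    ∃ K : ℂ → ℂ, MemReducedBergman D K ∧
      ∀ u : ℂ → ℂ, MemReducedBergman D u →
        u ζ = ∫ z in D, u z * (starRingEnd ℂ) (K z) := by
  let V := reducedBergmanSubmodule D hDo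
  have : CompleteSpace V := (isClosed_reducedBergmanSubmodule hDo hDc).completeSpace_coe
  -- Holomorphic representatives; `eval_eq_of_ae_eq` makes evaluating them linear.
  choose rep hrep hrepae using fun f : V => f.2
  obtain ⟨C, hC⟩ := exists_eval_bound hDo hζ
  let φ : V →ₗ[ℂ] ℂ :=
    { toFun := fun f => rep f ζ
      map_add' := fun f g => eval_eq_of_ae_eq hDo hζ (hrep _) ((hrep f).add hDo (hrep g))
        ((hrepae (f + g)).symm.trans
          ((Lp.coeFn_add f.1 g.1).trans ((hrepae f).add (hrepae g))))
      map_smul' := fun a f => eval_eq_of_ae_eq hDo hζ (hrep _) ((hrep f).const_smul hDo a)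
        ((hrepae (a • f)).symm.trans
          ((Lp.coeFn_smul a f.1).trans ((hrepae f).const_smul a))) }
  let Φ : StrongDual ℂ V := φ.mkContinuous C fun f => hC _ (hrep f) f.1 (hrepae f)
  let k : V := (InnerProductSpace.toDual ℂ V).symm Φ
  refine ⟨rep k, hrep k, fun u hu => ?_⟩
  let f : V := ⟨(hu.memLp hDo).toLp u, u, hu, (hu.memLp hDo).coeFn_toLp⟩
  have hfu : (f : Lp ℂ 2 (volume.restrict D)) =ᵐ[volume.restrict D] u :=
    (hu.memLp hDo).coeFn_toLp
  have h1 : inner ℂ k f = rep f ζ := InnerProductSpace.toDual_symm_apply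
  rw [Submodule.coe_inner, L2.inner_def] at h1
  rw [← eval_eq_of_ae_eq hDo hζ (hrep f) hu ((hrepae f).symm.trans hfu), ← h1]
  refine integral_congr_ae ?_
  filter_upwards [hfu, hrepae k] with x h2 h3
  rw [h2, h3, RCLike.inner_apply]
end
end
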